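/- arXiv:1605.02171 — 2 statements merged into one kernel-verified Lean document; each statement's English description precedes it below -/
import Mathlib

section
/- Let f = h + \overline{g} be a sense-preserving harmonic function on the unit disk \mathbb{D} (h, g holomorphic on \mathbb{D} with |g'(z)| < |h'(z)| for all z \in \mathbb{D}). Then the following are equivalent: (i) for every a \in \mathbb{D} and every r with 0 < r < 1-|a|, the image f(\mathbb{D}(a,r)) is a convex subset of \mathbb{C}; (iii) for all \zeta, b \in \mathbb{D}, writing T = |\zeta-b|^2 |1-\zeta\overline{b}|^2, one has T\,|h'(\zeta)|^2 (1+|b|^2 - 2\,\mathrm{Re}(\overline{b}\zeta)) + T\,\mathrm{Re}\{(\zeta-b)(1-\zeta\overline{b})\, h''(\zeta)\,\overline{h'(\zeta)}\} \geq T\,|g'(\zeta)|^2 (1+|b|^2 - 2\,\mathrm{Re}(\overline{b}\zeta)) + T\,\mathrm{Re}\{(\zeta-b)(1-\zeta\overline{b})\, g''(\zeta)\,\overline{g'(\zeta)}\} + \mathrm{Re}\{(\zeta-b)^3 (1-\zeta\overline{b})^3 \,[h''(\zeta) g'(\zeta) - h'(\zeta) g''(\zeta)]\}. -/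
open Complex Metric ComplexConjugate

noncomputable section

/-!
Let `a` be the centre of a disc and `w = ζ - a` the radius vector of a boundary point `ζ`. Pull the
tangent line of the image curve at `f ζ` back through `f`: it becomes a curve through `ζ` with
velocity `v ⊥ w` and some acceleration `A v`, quadratic in `v`. Convexity of the image says to
second order that this curve stays outside the disc, that is, `0 ≤ ‖v‖² + ⟪w, A v⟫`.

If all concentric images are convex, then `f` is injective on the closed disc, by increasing the
radius, so the image has a supporting line at `f ζ`, which yields the inequality. Conversely, the
strict inequality is a maximum principle for the distance from `a` along lifts of segments: a lift
stays in the disc spanned by its endpoints, hence every segment between image points can be lifted.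
The strict inequality on one disc follows from the weak one on slightly larger discs tangent to it
at `ζ`.

For `f = h + conj g` the inequality is the nonnegativity of the curvature of the image of a circle.
Every disc compactly contained in the unit disc is hyperbolic, and `b` is its hyperbolic centre.
-/

section LocalHomeomorphLift

open Filter Topology Set

variable {A X Y : Type*} [TopologicalSpace A] [TopologicalSpace X] [TopologicalSpace Y] {f : X → Y}

theorem exists_continuousMap_lift (hf : IsLocalHomeomorph f) {U : Set X} (hU : IsOpen U)
    (hinj : InjOn f U) (φ : C(A, Y)) (hφ : ∀ a, φ a ∈ f '' U) :
    ∃ γ : C(A, X), ∀ a, γ a ∈ U ∧ f (γ a) = φ a := by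
  have hemb : IsOpenEmbedding (U.domRestrict f) :=
    (hf.comp hU.isOpenEmbedding_subtypeVal.isLocalHomeomorph).isOpenEmbedding_of_injective
      hinj.injective
  choose γ hγU hγ using hφ
  have hcont : Continuous fun a ↦ (⟨γ a, hγU a⟩ : U) :=
    hemb.isInducing.continuous_iff.2 (by simpa [Function.comp_def, hγ] using φ.continuous)
  exact ⟨⟨γ, continuous_subtype_val.comp hcont⟩, fun a ↦ ⟨hγU a, hγ a⟩⟩

theorem eqOn_localInverse [T2Space X] (e : OpenPartialHomeomorph X Y) (he : IsLocalHomeomorph e)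
    {γ : A → X} (hγ : Continuous γ) {s : Set A} (hs : IsPreconnected s)
    (hsub : MapsTo (e ∘ γ) s e.target) {a : A} (ha : a ∈ s) (hγa : γ a ∈ e.source) :
    EqOn γ (e.symm ∘ e ∘ γ) s :=
  (T2Space.isSeparatedMap e).eqOn_of_comp_eqOn he.isLocallyInjective hs hγ.continuousOn
    (e.continuousOn_symm.comp (he.continuous.comp hγ).continuousOn hsub)
    (fun _ hb ↦ (e.right_inv (hsub hb)).symm) ha (e.left_inv hγa).symm

/-- Near each point the lifts are given by a single local inverse of `f`, which passes to the
limit. -/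
theorem continuous_of_tendsto_of_isLocalHomeomorph [T2Space X] [LocallyConnectedSpace A]
    (hf : IsLocalHomeomorph f) {ι : Type*} {u : Filter ι} [u.NeBot] {γ : ι → C(A, X)} {Γ : A → X}
    (hΓ : ∀ a, Tendsto (γ · a) u (𝓝 (Γ a))) (hfΓ : Continuous (f ∘ Γ))
    (hfγ : ∀ a, Tendsto (fun p : ι × A ↦ f (γ p.1 p.2)) (u ×ˢ 𝓝 a) (𝓝 (f (Γ a)))) :
    Continuous Γ := by
  rw [continuous_iff_continuousAt]
  intro a
  obtain ⟨e, hae, rfl⟩ := hf (Γ a)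
  have htarget : e.target ∈ 𝓝 (e (Γ a)) := e.open_target.mem_nhds (e.map_source hae)
  obtain ⟨P, hP, N, hN, hPN⟩ := mem_prod_iff.1 (hfγ a htarget)
  obtain ⟨J, hJ, hJconn, hJN⟩ := locallyConnectedSpace_iff_connected_subsets.1 ‹_› a
    (N ∩ (e ∘ Γ) ⁻¹' e.target) (inter_mem hN (hfΓ.continuousAt htarget))
  have haJ : a ∈ J := mem_of_mem_nhds hJ
  have hlocal : ∀ᶠ i in u, EqOn (γ i) (e.symm ∘ e ∘ γ i) J := by
    filter_upwards [hP, hΓ a (e.open_source.mem_nhds hae)] with i hi hia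
    exact eqOn_localInverse e hf (γ i).continuous hJconn
      (fun b hb ↦ hPN (mk_mem_prod hi (hJN hb).1)) haJ hia
  have hΓlocal : EqOn Γ (e.symm ∘ e ∘ Γ) J := fun b hb ↦ by
    refine tendsto_nhds_unique ((hΓ b).congr' (hlocal.mono fun i hi ↦ hi hb)) ?_
    exact (e.continuousAt_symm (hJN hb).2).tendsto.comp ((hf.continuous.tendsto _).comp (hΓ b))
  refine ContinuousAt.congr ?_ (hΓlocal.eventuallyEq_of_mem hJ).symm
  exact ContinuousAt.comp (f := e ∘ Γ) (e.continuousAt_symm (e.map_source hae)) hfΓ.continuousAt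

theorem locallyConnectedSpace_of_denselyOrdered {α : Type*} [ConditionallyCompleteLinearOrder α]
    [DenselyOrdered α] [TopologicalSpace α] [OrderTopology α] : LocallyConnectedSpace α :=
  locallyConnectedSpace_iff_connected_subsets.2 fun x U hU ↦
    ⟨ordConnectedComponent U x, ordConnectedComponent_mem_nhds.2 hU,
      OrdConnected.isPreconnected inferInstance, ordConnectedComponent_subset⟩

end LocalHomeomorphLift

section SegmentLift

open Filter Topology Set unitInterval

variable {X F : Type*} [TopologicalSpace X] [AddCommGroup F] [Module ℝ F]

/-- A path `γ` is a lift, through `f`, of the uniformly parametrized segment joining the images of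
its endpoints. A map whose domain is connected by such lifts has a convex range. -/
def IsSegmentLift (f : X → F) (γ : C(I, X)) : Prop :=
  ∀ t, f (γ t) = AffineMap.lineMap (f (γ 0)) (f (γ 1)) (t : ℝ)

/-- The points that lifts of segments through `f` join to `x₀`: the analogue, in the domain of `f`,
of the star of a point. -/
def liftStar (f : X → F) (x₀ : X) : Set X :=
  {x | ∃ γ : C(I, X), IsSegmentLift f γ ∧ γ 0 = x₀ ∧ γ 1 = x}

theorem self_mem_liftStar (f : X → F) (x₀ : X) : x₀ ∈ liftStar f x₀ :=
  ⟨.const I x₀, fun t ↦ by simp, rfl, rfl⟩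

theorem convex_range_of_liftStar_eq_univ {f : X → F} (hf : ∀ x₀, liftStar f x₀ = univ) :
    Convex ℝ (range f) := by
  rw [convex_iff_segment_subset]
  rintro _ ⟨x, rfl⟩ _ ⟨y, rfl⟩
  obtain ⟨γ, hγ, rfl, rfl⟩ := (hf x).ge (mem_univ y)
  rw [segment_eq_image_lineMap]
  rintro _ ⟨t, ht, rfl⟩
  exact ⟨γ ⟨t, ht⟩, hγ ⟨t, ht⟩⟩

variable [TopologicalSpace F] {f : X → F}

theorem continuous_lineMap_apply [IsTopologicalAddGroup F] [ContinuousSMul ℝ F]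
    (hf : Continuous f) (x₀ : X) :
    Continuous fun p : X × I ↦ AffineMap.lineMap (f x₀) (f p.1) (p.2 : ℝ) := by
  simp only [AffineMap.lineMap_apply_module']
  fun_prop

variable [T2Space X]

theorem IsSegmentLift.apply_eq_of_endpoints_eq (hf : IsLocalHomeomorph f) {γ : C(I, X)}
    (hγ : IsSegmentLift f γ) (h : f (γ 0) = f (γ 1)) (s t : I) : γ s = γ t :=
  (T2Space.isSeparatedMap f).const_of_comp hf.isLocallyInjective γ.continuous
    (fun s t ↦ by simp [hγ s, hγ t, h]) s t

theorem IsSegmentLift.injOn_range (hf : IsLocalHomeomorph f) {γ : C(I, X)}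
    (hγ : IsSegmentLift f γ) : InjOn f (range γ) := by
  rintro _ ⟨s, rfl⟩ _ ⟨t, rfl⟩ hst
  by_cases h : f (γ 0) = f (γ 1)
  · exact hγ.apply_eq_of_endpoints_eq hf h s t
  · rw [hγ s, hγ t] at hst
    rw [Subtype.ext (AffineMap.lineMap_injective ℝ h hst)]

variable [T2Space F] [IsTopologicalAddGroup F] [ContinuousSMul ℝ F]

theorem isOpen_liftStar (hf : IsLocalHomeomorph f) (x₀ : X) :
    IsOpen (liftStar f x₀) := by
  rw [isOpen_iff_mem_nhds]
  rintro _ ⟨γ, hγ, rfl, rfl⟩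
  obtain ⟨U, hU, hγU, hinj⟩ := (hγ.injOn_range hf).exists_isOpen_superset
    (isCompact_range γ.continuous) (fun x _ ↦ hf.continuous.continuousAt)
    fun x _ ↦ isLocallyInjective_iff_nhds.1 hf.isLocallyInjective x
  rw [range_subset_iff] at hγU
  have hline := continuous_lineMap_apply hf.continuous (γ 0)
  have hsegment : ∀ᶠ x in 𝓝 (γ 1), ∀ t ∈ (univ : Set I),
      AffineMap.lineMap (f (γ 0)) (f x) (t : ℝ) ∈ f '' U :=
    isCompact_univ.eventually_forall_of_forall_eventually fun t _ ↦
      hline.continuousAt.eventually_mem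
        ((hf.isOpenMap U hU).mem_nhds ⟨γ t, hγU t, hγ t⟩)
  filter_upwards [hsegment, hU.mem_nhds (hγU 1)] with x hx hxU
  obtain ⟨δ, hδ⟩ := exists_continuousMap_lift hf hU hinj
    ⟨_, hline.comp (Continuous.prodMk_right x)⟩ fun t ↦ hx t (mem_univ t)
  have hδ₀ : δ 0 = γ 0 := hinj (hδ 0).1 (hγU 0) (by simp [hδ])
  have hδ₁ : δ 1 = x := hinj (hδ 1).1 hxU (by simp [hδ])
  exact ⟨δ, fun t ↦ by simp [hδ₀, hδ₁, hδ], hδ₀, hδ₁⟩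

theorem isClosed_liftStar (hf : IsLocalHomeomorph f) {x₀ : X}
    (hK : ∀ z, ∃ K, IsCompact K ∧ ∀ᶠ y in 𝓝 z, ∀ γ : C(I, X),
      IsSegmentLift f γ → γ 0 = x₀ → γ 1 = y → ∀ t, γ t ∈ K) :
    IsClosed (liftStar f x₀) := by
  have : Nonempty C(I, X) := ⟨.const I x₀⟩
  have : LocallyConnectedSpace I := locallyConnectedSpace_of_denselyOrdered
  rw [isClosed_iff_ultrafilter]
  intro z u hu hmem
  obtain ⟨K, hKcompact, hK⟩ := hK z
  choose! γ hγ hγ₀ hγ₁ using fun y (hy : y ∈ liftStar f x₀) ↦ hy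
  have hγK (t : I) : ∀ᶠ y in u, γ y t ∈ K := by
    filter_upwards [hu hK, hmem] with y hy hyu using hy _ (hγ y hyu) (hγ₀ y hyu) (hγ₁ y hyu) t
  choose Γ _ hΓ using fun t ↦
    hKcompact.ultrafilter_le_nhds (u.map (γ · t)) (le_principal_iff.2 (hγK t))
  replace hΓ : ∀ t, Tendsto (γ · t) u (𝓝 (Γ t)) := hΓ
  have hline := continuous_lineMap_apply hf.continuous x₀
  have hfγ : ∀ᶠ y in u, ∀ t : I, f (γ y t) = AffineMap.lineMap (f x₀) (f y) (t : ℝ) := by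
    filter_upwards [hmem] with y hy t
    simpa only [hγ₀ y hy, hγ₁ y hy] using hγ y hy t
  have hfΓ (t : I) : f (Γ t) = AffineMap.lineMap (f x₀) (f z) (t : ℝ) := by
    refine tendsto_nhds_unique ((hf.continuous.tendsto _).comp (hΓ t)) ?_
    refine Tendsto.congr' (hfγ.mono fun y hy ↦ (hy t).symm) ?_
    exact ((hline.comp (Continuous.prodMk_left t)).tendsto z).mono_left hu
  have hΓ₀ : Γ 0 = x₀ := tendsto_nhds_unique (hΓ 0) <|
    tendsto_const_nhds.congr' (Eventually.mono hmem fun y hy ↦ (hγ₀ y hy).symm)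
  have hΓ₁ : Γ 1 = z := tendsto_nhds_unique (hΓ 1) <|
    Tendsto.congr' (Eventually.mono hmem fun y hy ↦ (hγ₁ y hy).symm) hu
  have hΓcont : Continuous Γ := by
    refine continuous_of_tendsto_of_isLocalHomeomorph hf hΓ ?_ fun t ↦ ?_
    · exact (hline.comp (Continuous.prodMk_right z)).congr fun t ↦ (hfΓ t).symm
    · rw [hfΓ t]
      refine Tendsto.congr' ?_ ((hline.tendsto (z, t)).mono_left ?_)
      · exact (hfγ.prod_inl _).mono fun p hp ↦ (hp p.2).symm
      · exact (prod_mono_left _ hu).trans nhds_prod_eq.ge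
  exact ⟨⟨Γ, hΓcont⟩, fun t ↦ by simp [hΓ₀, hΓ₁, hfΓ], hΓ₀, hΓ₁⟩

theorem convex_range_of_isLocalHomeomorph [PreconnectedSpace X] (hf : IsLocalHomeomorph f)
    (hK : ∀ x₀ z, ∃ K, IsCompact K ∧ ∀ᶠ y in 𝓝 z, ∀ γ : C(I, X),
      IsSegmentLift f γ → γ 0 = x₀ → γ 1 = y → ∀ t, γ t ∈ K) :
    Convex ℝ (range f) :=
  convex_range_of_liftStar_eq_univ fun x₀ ↦
    IsClopen.eq_univ ⟨isClosed_liftStar hf (hK x₀), isOpen_liftStar hf x₀⟩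
      ⟨x₀, self_mem_liftStar f x₀⟩

end SegmentLift

section Acceleration

open Filter Topology Set

variable {E F : Type*} [NormedAddCommGroup E] [NormedSpace ℝ E]
  [NormedAddCommGroup F] [NormedSpace ℝ F] {f : E → F} {γ : ℝ → E} {t : ℝ}

/-- The acceleration, at `x`, of the curve through `x` with velocity `v` that `f` maps to a
uniformly parametrized line. It is meaningful only where `fderiv ℝ f x` is invertible. -/
def lineAcceleration (f : E → F) (x v : E) : E :=
  -(fderiv ℝ f x).inverse (fderiv ℝ (fderiv ℝ f) x v v)

theorem deriv_deriv_comp (hf : ContDiffAt ℝ 2 f (γ t)) (hγ : ContDiffAt ℝ 2 γ t) :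
    deriv (deriv (f ∘ γ)) t = fderiv ℝ (fderiv ℝ f) (γ t) (deriv γ t) (deriv γ t)
      + fderiv ℝ f (γ t) (deriv (deriv γ) t) := by
  have hderiv : deriv (f ∘ γ) =ᶠ[𝓝 t] fun s ↦ fderiv ℝ f (γ s) (deriv γ s) := by
    filter_upwards [hγ.continuousAt.eventually (hf.eventually (by simp)),
      hγ.eventually (by simp)] with s hfs hγs
    exact fderiv_comp_deriv s (hfs.differentiableAt two_ne_zero) (hγs.differentiableAt two_ne_zero)
  have hf' : HasFDerivAt (fderiv ℝ f) (fderiv ℝ (fderiv ℝ f) (γ t)) (γ t) :=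
    ((hf.fderiv_right (m := 1) le_rfl).differentiableAt one_ne_zero).hasFDerivAt
  have hγ' : HasDerivAt (deriv γ) (deriv (deriv γ) t) t :=
    ((hγ.derivWithin (m := 1) le_rfl).differentiableAt one_ne_zero).hasDerivAt
  have hγt : HasDerivAt γ (deriv γ t) t := (hγ.differentiableAt two_ne_zero).hasDerivAt
  rw [hderiv.deriv_eq]
  exact ((hf'.comp_hasDerivAt t hγt).clm_apply hγ').deriv

theorem deriv_deriv_eq_lineAcceleration (hf : ContDiffAt ℝ 2 f (γ t))
    (hinv : (fderiv ℝ f (γ t)).IsInvertible) (hγ : ContDiffAt ℝ 2 γ t)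
    {p q : F} (hline : f ∘ γ =ᶠ[𝓝 t] AffineMap.lineMap p q) :
    deriv (deriv γ) t = lineAcceleration f (γ t) (deriv γ t) := by
  have hlineMap : deriv (AffineMap.lineMap p q : ℝ → F) = fun _ ↦ q - p :=
    funext fun _ ↦ AffineMap.hasDerivAt_lineMap.deriv
  have hzero : deriv (deriv (f ∘ γ)) t = 0 := by
    rw [hline.deriv.deriv_eq, hlineMap, deriv_const]
  rw [deriv_deriv_comp hf hγ, add_comm, add_eq_zero_iff_eq_neg] at hzero
  rw [lineAcceleration, ← map_neg, ← hzero, hinv.inverse_apply_self]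

theorem deriv_ne_zero_of_eventuallyEq_lineMap (hf : DifferentiableAt ℝ f (γ t))
    (hγ : DifferentiableAt ℝ γ t) {p q : F} (hpq : p ≠ q)
    (hline : f ∘ γ =ᶠ[𝓝 t] AffineMap.lineMap p q) : deriv γ t ≠ 0 := fun hzero ↦ by
  have hderiv := fderiv_comp_deriv t hf hγ
  rw [hline.deriv_eq, AffineMap.hasDerivAt_lineMap.deriv, hzero, map_zero, sub_eq_zero] at hderiv
  exact hpq hderiv.symm

theorem contDiffAt_of_comp [CompleteSpace E] {n : WithTop ℕ∞} (hn : n ≠ 0)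
    (hf : ContDiffAt ℝ n f (γ t)) (hinv : (fderiv ℝ f (γ t)).IsInvertible)
    (hγ : ContinuousAt γ t) (hfγ : ContDiffAt ℝ n (f ∘ γ) t) : ContDiffAt ℝ n γ t := by
  obtain ⟨f', hf'⟩ := hinv
  have hd : HasFDerivAt f (f' : E →L[ℝ] F) (γ t) :=
    hf' ▸ (hf.differentiableAt hn).hasFDerivAt
  refine ((hf.to_localInverse hd hn).comp t hfγ).congr_of_eventuallyEq ?_
  filter_upwards [hγ.eventually (hf.hasStrictFDerivAt' hd hn).eventually_left_inverse] with s hs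
  exact hs.symm

theorem isLocalHomeomorphOn_of_contDiffAt [CompleteSpace E] {U : Set E} {n : WithTop ℕ∞}
    (hn : n ≠ 0) (hf : ∀ x ∈ U, ContDiffAt ℝ n f x)
    (hinv : ∀ x ∈ U, (fderiv ℝ f x).IsInvertible) : IsLocalHomeomorphOn f U := by
  refine .mk f U fun x hx ↦ ?_
  obtain ⟨f', hf'⟩ := hinv x hx
  have hd : HasFDerivAt f (f' : E →L[ℝ] F) x :=
    hf' ▸ ((hf x hx).differentiableAt hn).hasFDerivAt
  exact ⟨(hf x hx).toOpenPartialHomeomorph f hd hn,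
    (hf x hx).mem_toOpenPartialHomeomorph_source hd hn, eqOn_refl _ _⟩

theorem isLocalHomeomorph_domRestrict_ball [CompleteSpace E] {a : E} {r : ℝ} {n : WithTop ℕ∞}
    (hn : n ≠ 0) (hf : ∀ x ∈ ball a r, ContDiffAt ℝ n f x)
    (hinv : ∀ x ∈ ball a r, (fderiv ℝ f x).IsInvertible) :
    IsLocalHomeomorph ((ball a r).domRestrict f) :=
  isLocalHomeomorph_iff_isLocalHomeomorphOn_univ.2 <|
    (isLocalHomeomorphOn_of_contDiffAt hn hf hinv).comp
      isOpen_ball.isOpenEmbedding_subtypeVal.isLocalHomeomorph.isLocalHomeomorphOn fun x _ ↦ x.2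

theorem deriv_deriv_nonpos_of_isLocalMax {φ : ℝ → ℝ} (hmax : IsLocalMax φ t)
    (hφ : ContinuousAt φ t) : deriv (deriv φ) t ≤ 0 := by
  by_contra! hpos
  have hmin := isLocalMin_of_deriv_deriv_pos hpos hmax.deriv_eq_zero hφ
  have hconst : φ =ᶠ[𝓝 t] fun _ ↦ φ t := by
    filter_upwards [hmax, hmin] with s h₁ h₂ using le_antisymm h₁ h₂
  have : deriv φ =ᶠ[𝓝 t] fun _ ↦ 0 := hconst.deriv.trans (by simp)
  simp [this.deriv_eq] at hpos

end Acceleration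

section MaximumPrinciple

open Filter Topology Set RealInnerProductSpace

variable {E F : Type*} [NormedAddCommGroup E] [InnerProductSpace ℝ E]
  [NormedAddCommGroup F] [NormedSpace ℝ F] {f : E → F}

theorem deriv_deriv_norm_sub_sq {γ : ℝ → E} {t : ℝ} (hγ : ContDiffAt ℝ 2 γ t) (a : E) :
    deriv (deriv fun s ↦ ‖γ s - a‖ ^ 2) t
      = 2 * (‖deriv γ t‖ ^ 2 + ⟪γ t - a, deriv (deriv γ) t⟫) := by
  have hγt : HasDerivAt γ (deriv γ t) t := (hγ.differentiableAt two_ne_zero).hasDerivAt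
  have hγ' : HasDerivAt (deriv γ) (deriv (deriv γ) t) t :=
    ((hγ.derivWithin (m := 1) le_rfl).differentiableAt one_ne_zero).hasDerivAt
  have hderiv : deriv (fun s ↦ ‖γ s - a‖ ^ 2) =ᶠ[𝓝 t] fun s ↦ 2 * ⟪γ s - a, deriv γ s⟫ := by
    filter_upwards [hγ.eventually (by simp)] with s hs
    exact ((hs.differentiableAt two_ne_zero).hasDerivAt.sub_const a).norm_sq.deriv
  rw [hderiv.deriv_eq, (((hγt.sub_const a).inner ℝ hγ').const_mul 2).deriv,
    real_inner_self_eq_norm_sq, add_comm]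

theorem norm_sub_le_max_of_inner_deriv_deriv_pos {γ : ℝ → E} {a : E} {p q : ℝ}
    (hcont : ContinuousOn γ (Icc p q)) (hγ : ∀ t ∈ Ioo p q, ContDiffAt ℝ 2 γ t)
    (hpos : ∀ t ∈ Ioo p q, γ t ≠ a → ⟪γ t - a, deriv γ t⟫ = 0 →
      0 < ‖deriv γ t‖ ^ 2 + ⟪γ t - a, deriv (deriv γ) t⟫)
    {t : ℝ} (ht : t ∈ Icc p q) : ‖γ t - a‖ ≤ max ‖γ p - a‖ ‖γ q - a‖ := by
  obtain ⟨s, hs, hmax⟩ := isCompact_Icc.exists_isMaxOn ⟨t, ht⟩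
    ((hcont.sub continuousOn_const).norm)
  refine (hmax ht).trans ?_
  rcases eq_endpoints_or_mem_Ioo_of_mem_Icc hs with rfl | rfl | hs'
  · exact le_max_left ..
  · exact le_max_right ..
  by_cases hsa : γ s = a
  · simp [hsa]
  have hlocal : IsLocalMax (fun s ↦ ‖γ s - a‖ ^ 2) s := by
    filter_upwards [hmax.isLocalMax (Icc_mem_nhds hs'.1 hs'.2)] with u hu
    exact pow_le_pow_left₀ (norm_nonneg _) hu 2
  have hderiv := ((hγ s hs').differentiableAt two_ne_zero).hasDerivAt.sub_const a |>.norm_sq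
  have hzero : ⟪γ s - a, deriv γ s⟫ = 0 := by
    simpa using hlocal.hasDerivAt_eq_zero hderiv
  have := deriv_deriv_nonpos_of_isLocalMax hlocal hderiv.continuousAt
  rw [deriv_deriv_norm_sub_sq (hγ s hs')] at this
  linarith [hpos s hs' hsa hzero]

end MaximumPrinciple

section Sufficiency

open Filter Topology Set RealInnerProductSpace unitInterval

variable {E F : Type*} [NormedAddCommGroup E] [InnerProductSpace ℝ E]
  [NormedAddCommGroup F] [NormedSpace ℝ F] {f : E → F} {a : E} {r : ℝ}

theorem norm_sub_le_max_of_isSegmentLift [CompleteSpace E]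
    (hf : ∀ x ∈ ball a r, ContDiffAt ℝ 2 f x)
    (hinv : ∀ x ∈ ball a r, (fderiv ℝ f x).IsInvertible)
    (hpos : ∀ x ∈ ball a r, x ≠ a → ∀ v ≠ 0, ⟪x - a, v⟫ = 0 →
      0 < ‖v‖ ^ 2 + ⟪x - a, lineAcceleration f x v⟫)
    {γ : C(I, ball a r)} (hγ : IsSegmentLift ((ball a r).domRestrict f) γ)
    (hne : f (γ 0) ≠ f (γ 1)) (t : I) :
    ‖(γ t : E) - a‖ ≤ max ‖(γ 0 : E) - a‖ ‖(γ 1 : E) - a‖ := by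
  set Γ : ℝ → E := IccExtend zero_le_one fun s ↦ (γ s : E)
  have hΓγ (s : I) : Γ s = γ s := IccExtend_val zero_le_one (fun s ↦ (γ s : E)) s
  have hball (s : ℝ) : Γ s ∈ ball a r := (γ (projIcc 0 1 zero_le_one s)).2
  have hΓcont : Continuous Γ := (continuous_subtype_val.comp γ.continuous).Icc_extend'
  have hline : ∀ s ∈ Ioo (0 : ℝ) 1,
      f ∘ Γ =ᶠ[𝓝 s] AffineMap.lineMap (f (γ 0)) (f (γ 1)) := fun s hs ↦ by
    filter_upwards [Icc_mem_nhds hs.1 hs.2] with u hu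
    simpa [hΓγ ⟨u, hu⟩] using hγ ⟨u, hu⟩
  have hC2 : ∀ s ∈ Ioo (0 : ℝ) 1, ContDiffAt ℝ 2 Γ s := fun s hs ↦
    contDiffAt_of_comp two_ne_zero (hf _ (hball s)) (hinv _ (hball s)) hΓcont.continuousAt
      ((AffineMap.contDiff_lineMap _ _).contDiffAt.congr_of_eventuallyEq (hline s hs))
  have hmax := norm_sub_le_max_of_inner_deriv_deriv_pos (a := a) hΓcont.continuousOn hC2
    (fun s hs hsa horth ↦ ?_) t.2
  · simpa only [hΓγ t, show Γ 0 = γ 0 from hΓγ 0, show Γ 1 = γ 1 from hΓγ 1] using hmax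
  rw [deriv_deriv_eq_lineAcceleration (hf _ (hball s)) (hinv _ (hball s)) (hC2 s hs) (hline s hs)]
  refine hpos _ (hball s) hsa _ (deriv_ne_zero_of_eventuallyEq_lineMap ?_ ?_ hne (hline s hs)) horth
  · exact (hf _ (hball s)).differentiableAt two_ne_zero
  · exact (hC2 s hs).differentiableAt two_ne_zero

/-- A lift of a segment cannot approach the sphere `sphere a r`: by the maximum principle its
distance from `a` is largest at an endpoint. -/
theorem convex_image_ball_of_lineAcceleration_pos [ProperSpace E]
    (hf : ∀ x ∈ ball a r, ContDiffAt ℝ 2 f x)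
    (hinv : ∀ x ∈ ball a r, (fderiv ℝ f x).IsInvertible)
    (hpos : ∀ x ∈ ball a r, x ≠ a → ∀ v ≠ 0, ⟪x - a, v⟫ = 0 →
      0 < ‖v‖ ^ 2 + ⟪x - a, lineAcceleration f x v⟫) :
    Convex ℝ (f '' ball a r) := by
  have hlocal := isLocalHomeomorph_domRestrict_ball two_ne_zero hf hinv
  have : PreconnectedSpace (ball a r) :=
    isPreconnected_iff_preconnectedSpace.1 (convex_ball a r).isPreconnected
  rw [← range_domRestrict]
  refine convex_range_of_isLocalHomeomorph hlocal fun x₀ z ↦ ?_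
  obtain ⟨ρ, hρ, hρr⟩ := exists_between (max_lt (mem_ball.1 x₀.2) (mem_ball.1 z.2))
  rw [max_lt_iff] at hρ
  refine ⟨(↑) ⁻¹' closedBall a ρ, ?_, ?_⟩
  · exact IsInducing.subtypeVal.isCompact_preimage' (isCompact_closedBall a ρ) <|
      Subtype.range_coe ▸ closedBall_subset_ball hρr
  have hnear : ∀ᶠ y : ball a r in 𝓝 z, dist (y : E) a < ρ :=
    (continuous_subtype_val.dist continuous_const).continuousAt.eventually_lt
      continuousAt_const hρ.2
  filter_upwards [hnear] with y hy γ hγ h₀ h₁ t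
  by_cases hne : f (γ 0) = f (γ 1)
  · simpa [hγ.apply_eq_of_endpoints_eq hlocal hne t 0, h₀] using hρ.1.le
  · have := norm_sub_le_max_of_isSegmentLift hf hinv hpos hγ hne t
    rw [← dist_eq_norm, ← dist_eq_norm, ← dist_eq_norm, h₀, h₁] at this
    exact this.trans (max_le hρ.1.le hy.le)

end Sufficiency

section Support

open Filter Topology Set RealInnerProductSpace

variable {E F : Type*} [NormedAddCommGroup E] [InnerProductSpace ℝ E]
  [NormedAddCommGroup F] [NormedSpace ℝ F] {f : E → F} {a x : E}

theorem eventually_mem_ball_of_inner_deriv_neg {γ : ℝ → E} {v : E} (hγ : HasDerivAt γ v 0)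
    (hv : ⟪γ 0 - a, v⟫ < 0) : ∀ᶠ s in 𝓝[>] (0 : ℝ), γ s ∈ ball a ‖γ 0 - a‖ := by
  have hslope := (hγ.sub_const a).norm_sq.tendsto_slope_zero_right
  filter_upwards [hslope.eventually_lt_const (by linarith : _ < (0 : ℝ)), self_mem_nhdsWithin]
    with s hs hs0
  rw [smul_eq_mul, zero_add] at hs
  have hsq : ‖γ s - a‖ ^ 2 < ‖γ 0 - a‖ ^ 2 :=
    sub_neg.1 (neg_of_mul_neg_right hs (inv_pos.2 hs0).le)
  exact mem_ball_iff_norm.2 (lt_of_pow_lt_pow_left₀ 2 (norm_nonneg _) hsq)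

theorem exists_nonneg_multiplier_of_forall_mem_ball_le {φ : E → ℝ} {φ' : E →L[ℝ] ℝ}
    (hφ : HasFDerivAt φ φ' x) (hmax : ∀ z ∈ ball a ‖x - a‖, φ z ≤ φ x) (hxa : x ≠ a) :
    ∃ c, 0 ≤ c ∧ ∀ v, φ' v = c * ⟪x - a, v⟫ := by
  set w := x - a
  have hw : 0 < ‖w‖ ^ 2 := pow_pos (norm_pos_iff.2 (sub_ne_zero.2 hxa)) 2
  have hinward : ∀ v, ⟪w, v⟫ < 0 → φ' v ≤ 0 := fun v hv ↦ by
    have hline : HasDerivAt (fun s : ℝ ↦ x + s • v) v 0 := by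
      simpa using ((hasDerivAt_id (0 : ℝ)).smul_const v).const_add x
    have hslope := (hφ.comp_hasDerivAt_of_eq (0 : ℝ) hline (by simp)).tendsto_slope_zero_right
    refine le_of_tendsto hslope ?_
    filter_upwards [eventually_mem_ball_of_inner_deriv_neg (a := a) hline (by simpa using hv),
      self_mem_nhdsWithin] with s hs hs0
    refine mul_nonpos_of_nonneg_of_nonpos (inv_pos.2 hs0).le (sub_nonpos.2 ?_)
    simpa using hmax _ (by simpa using hs)
  have hc : 0 ≤ φ' w := by
    simpa using hinward (-w) (by simpa [real_inner_self_eq_norm_sq] using hw)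
  have hle (v : E) : φ' v ≤ ⟪w, v⟫ / ‖w‖ ^ 2 * φ' w := by
    refine ge_of_tendsto ((continuous_mul_const (φ' w)).continuousWithinAt
      (s := Ioi (⟪w, v⟫ / ‖w‖ ^ 2))) ?_
    filter_upwards [self_mem_nhdsWithin] with t ht
    have := hinward (v - t • w) (by
      rw [inner_sub_right, inner_smul_right, real_inner_self_eq_norm_sq]
      linarith [(div_lt_iff₀ hw).1 ht])
    simpa using this
  refine ⟨φ' w / ‖w‖ ^ 2, by positivity, fun v ↦ le_antisymm ?_ ?_⟩
  · exact (hle v).trans_eq (by ring)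
  · have := hle (-v)
    rw [map_neg, inner_neg_right, neg_div, neg_mul, neg_le_neg_iff] at this
    exact (by ring : _ = _).trans_le this

theorem eventually_add_smul_mem_image_ball [CompleteSpace E] (hf : ContDiffAt ℝ 1 f x)
    (hinv : (fderiv ℝ f x).IsInvertible) {V : Set E} (hV : V ∈ 𝓝 x) {d : F}
    (hd : ⟪x - a, (fderiv ℝ f x).inverse d⟫ < 0) :
    ∀ᶠ s in 𝓝[>] (0 : ℝ), f x + s • d ∈ f '' (ball a ‖x - a‖ ∩ V) := by
  obtain ⟨f', hf'⟩ := hinv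
  have hstrict : HasStrictFDerivAt f (f' : E →L[ℝ] F) x :=
    hf' ▸ hf.hasStrictFDerivAt one_ne_zero
  have hline : HasDerivAt (fun s : ℝ ↦ f x + s • d) d 0 := by
    simpa using ((hasDerivAt_id (0 : ℝ)).smul_const d).const_add (f x)
  have hγ := hstrict.to_localInverse.hasFDerivAt.comp_hasDerivAt_of_eq (0 : ℝ) hline (by simp)
  rw [← hf', ContinuousLinearMap.inverse_equiv] at hd
  have hγ0 : (hstrict.localInverse f f' x ∘ fun s : ℝ ↦ f x + s • d) 0 = x := by
    simp
  have hball := eventually_mem_ball_of_inner_deriv_neg (a := a) hγ (by rwa [hγ0])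
  have hlim : Tendsto (fun s : ℝ ↦ f x + s • d) (𝓝[>] 0) (𝓝 (f x)) := by
    simpa using hline.continuousAt.tendsto.mono_left nhdsWithin_le_nhds
  filter_upwards [hball, hlim.eventually (hstrict.localInverse_tendsto hV),
    hlim.eventually hstrict.eventually_right_inverse] with s hs hsV hsf
  rw [hγ0] at hs
  exact ⟨_, ⟨hs, hsV⟩, hsf⟩

theorem isOpen_image_ball [CompleteSpace E] {r : ℝ} (hf : ∀ z ∈ ball a r, ContDiffAt ℝ 1 f z)
    (hinv : ∀ z ∈ ball a r, (fderiv ℝ f z).IsInvertible) : IsOpen (f '' ball a r) := by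
  rw [← range_domRestrict]
  exact (isLocalHomeomorph_domRestrict_ball one_ne_zero hf hinv).isOpenMap.isOpen_range

theorem exists_supporting_functional (hconv : Convex ℝ (f '' ball a ‖x - a‖))
    (hopen : IsOpen (f '' ball a ‖x - a‖)) (hx : f x ∉ f '' ball a ‖x - a‖)
    (hf : DifferentiableAt ℝ f x) (hinv : (fderiv ℝ f x).IsInvertible) (hxa : x ≠ a) :
    ∃ l : F →L[ℝ] ℝ, ∃ c > 0, (∀ z ∈ ball a ‖x - a‖, l (f z) < l (f x)) ∧
      ∀ v, l (fderiv ℝ f x v) = c * ⟪x - a, v⟫ := by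
  obtain ⟨l, hl⟩ := geometric_hahn_banach_open_point hconv hopen hx
  rw [forall_mem_image] at hl
  obtain ⟨c, hc, hmult⟩ := exists_nonneg_multiplier_of_forall_mem_ball_le
    (l.hasFDerivAt.comp x hf.hasFDerivAt) (fun z hz ↦ (hl hz).le) hxa
  refine ⟨l, c, hc.lt_of_ne' fun hc0 ↦ ?_, fun z hz ↦ hl hz, hmult⟩
  have hzero (y : F) : l y = 0 := by
    simpa [hc0, hinv.self_apply_inverse] using hmult ((fderiv ℝ f x).inverse y)
  simpa [hzero] using hl (mem_ball_self (norm_pos_iff.2 (sub_ne_zero.2 hxa)))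

end Support

section Injectivity

open Filter Topology Set RealInnerProductSpace

theorem eq_of_apply_eq_of_injOn {X Y : Type*} [TopologicalSpace X] [T2Space X]
    [TopologicalSpace Y] {f : X → Y} {U : Set X} (hU : IsOpen U) (hinj : InjOn f U)
    (hf : IsLocalHomeomorphOn f U) {x y : X} (hx : x ∈ U) (hy : y ∈ closure U)
    (hfy : ContinuousAt f y) (hxy : f x = f y) : x = y := by
  by_contra hne
  obtain ⟨V, W, hV, hW, hxV, hyW, hVW⟩ := t2_separation hne
  have himage : f '' (U ∩ V) ∈ 𝓝 (f y) := by
    rw [← hxy, ← hf.map_nhds_eq hx]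
    exact image_mem_map ((hU.inter hV).mem_nhds ⟨hx, hxV⟩)
  obtain ⟨z, ⟨⟨u, ⟨huU, huV⟩, huz⟩, hzW⟩, hzU⟩ :=
    mem_closure_iff_nhds.1 hy _ (inter_mem (hfy himage) (hW.mem_nhds hyW))
  obtain rfl : u = z := hinj huU hzU huz
  exact disjoint_left.1 hVW huV hzW

theorem isClosed_setOf_injOn_ball {X Y : Type*} [PseudoMetricSpace X] (f : X → Y) (a : X) :
    IsClosed {r | InjOn f (ball a r)} := by
  have : {r | InjOn f (ball a r)}
      = ⋂ (x) (y) (_ : f x = f y) (_ : x ≠ y), Iic (max (dist x a) (dist y a)) := by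
    ext r
    simp only [InjOn, mem_ball, mem_ofPred_eq, mem_iInter, mem_Iic, ← not_lt, max_lt_iff, ne_eq]
    grind
  rw [this]
  exact isClosed_iInter fun _ ↦ isClosed_iInter fun _ ↦ isClosed_iInter fun _ ↦
    isClosed_iInter fun _ ↦ isClosed_Iic

theorem eq_of_eventually_mem_image_inter {X Y ι : Type*} [TopologicalSpace X] [T2Space X]
    {f : X → Y} {U : Set X} (hinj : InjOn f U) {l : Filter ι} [l.NeBot] {φ : ι → Y} {x y : X}
    (hx : ∀ V ∈ 𝓝 x, ∀ᶠ s in l, φ s ∈ f '' (U ∩ V))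
    (hy : ∀ V ∈ 𝓝 y, ∀ᶠ s in l, φ s ∈ f '' (U ∩ V)) : x = y := by
  by_contra hne
  obtain ⟨V, W, hV, hW, hxV, hyW, hVW⟩ := t2_separation hne
  obtain ⟨s, ⟨u, ⟨hu, huV⟩, hus⟩, ⟨v, ⟨hv, hvW⟩, hvs⟩⟩ :=
    ((hx V (hV.mem_nhds hxV)).and (hy W (hW.mem_nhds hyW))).exists
  obtain rfl : u = v := hinj hu hv (hus.trans hvs.symm)
  exact disjoint_left.1 hVW huV hvW

variable {E F : Type*} [NormedAddCommGroup E] [InnerProductSpace ℝ E]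
  [NormedAddCommGroup F] [NormedSpace ℝ F] {f : E → F} {a : E} {r : ℝ}

theorem exists_injOn_ball_of_injOn_closedBall [ProperSpace E]
    (hf : ∀ x ∈ closedBall a r, ContDiffAt ℝ 1 f x)
    (hinv : ∀ x ∈ closedBall a r, (fderiv ℝ f x).IsInvertible) (hinj : InjOn f (closedBall a r)) :
    ∃ s > r, InjOn f (ball a s) := by
  rcases lt_or_ge r 0 with hr | hr
  · exact ⟨0, hr, by simp⟩
  have hlocal := isLocalHomeomorphOn_of_contDiffAt one_ne_zero hf hinv
  obtain ⟨U, hU, hsub, hUinj⟩ := hinj.exists_isOpen_superset (isCompact_closedBall a r)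
    (fun x hx ↦ (hf x hx).continuousAt) fun x hx ↦ by
      obtain ⟨e, hxe, rfl⟩ := hlocal x hx
      exact ⟨e.source, e.open_source.mem_nhds hxe, e.injOn⟩
  obtain ⟨δ, hδ, hδU⟩ := (isCompact_closedBall a r).exists_thickening_subset_open hU hsub
  rw [thickening_closedBall hδ hr] at hδU
  exact ⟨δ + r, by linarith, hUinj.mono hδU⟩

theorem eventually_toward_center_mem_image_ball [CompleteSpace E] {x : E}
    (hconv : Convex ℝ (f '' ball a ‖x - a‖)) (hopen : IsOpen (f '' ball a ‖x - a‖))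
    (hx : f x ∉ f '' ball a ‖x - a‖) (hf : ContDiffAt ℝ 1 f x)
    (hinv : (fderiv ℝ f x).IsInvertible) (hxa : x ≠ a) {V : Set E} (hV : V ∈ 𝓝 x) :
    ∀ᶠ s in 𝓝[>] (0 : ℝ), f x + s • (f a - f x) ∈ f '' (ball a ‖x - a‖ ∩ V) := by
  refine eventually_add_smul_mem_image_ball hf hinv hV ?_
  obtain ⟨l, c, hc, hl, hmult⟩ := exists_supporting_functional hconv hopen hx
    (hf.differentiableAt one_ne_zero) hinv hxa
  have hcenter := hl a (mem_ball_self (norm_pos_iff.2 (sub_ne_zero.2 hxa)))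
  have := hmult ((fderiv ℝ f x).inverse (f a - f x))
  rw [hinv.self_apply_inverse, map_sub] at this
  exact neg_of_mul_neg_right (this ▸ sub_neg.2 hcenter) hc.le

/-- Two points of the sphere with the same image lie on two sheets that overlap inside the ball:
both local inverses of `f` map the segment from the common boundary value towards `f a` into it. -/
theorem injOn_closedBall_of_injOn_ball [CompleteSpace E]
    (hf : ∀ x ∈ closedBall a r, ContDiffAt ℝ 1 f x)
    (hinv : ∀ x ∈ closedBall a r, (fderiv ℝ f x).IsInvertible)
    (hconv : Convex ℝ (f '' ball a r)) (hinj : InjOn f (ball a r)) :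
    InjOn f (closedBall a r) := by
  have hf' : ∀ x ∈ ball a r, ContDiffAt ℝ 1 f x := fun x hx ↦ hf x (ball_subset_closedBall hx)
  have hinv' : ∀ x ∈ ball a r, (fderiv ℝ f x).IsInvertible :=
    fun x hx ↦ hinv x (ball_subset_closedBall hx)
  intro x hx y hy hxy
  rcases eq_or_ne r 0 with rfl | hr
  · simp_all
  have hinterior {u v : E} (hu : u ∈ ball a r) (hv : v ∈ closedBall a r) (huv : f u = f v) :
      u = v :=
    eq_of_apply_eq_of_injOn isOpen_ball hinj
      (isLocalHomeomorphOn_of_contDiffAt one_ne_zero hf' hinv') hu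
      (by rwa [closure_ball a hr]) (hf v hv).continuousAt huv
  have hboundary {u : E} (hu : u ∈ sphere a r) {V : Set E} (hV : V ∈ 𝓝 u) :
      ∀ᶠ s in 𝓝[>] (0 : ℝ), f u + s • (f a - f u) ∈ f '' (ball a r ∩ V) := by
    have hu' := sphere_subset_closedBall hu
    have hdist : ‖u - a‖ = r := mem_sphere_iff_norm.1 hu
    have hnot : f u ∉ f '' ball a ‖u - a‖ := by
      rintro ⟨z, hz, hzu⟩
      rw [hdist] at hz
      exact sphere_disjoint_ball.notMem_of_mem_left hu (hinterior hz hu' hzu ▸ hz)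
    rw [← hdist] at hconv hf' hinv' hr ⊢
    exact eventually_toward_center_mem_image_ball hconv (isOpen_image_ball hf' hinv') hnot
      (hf u hu') (hinv u hu') (sub_ne_zero.1 (norm_ne_zero_iff.1 hr)) hV
  rcases (mem_closedBall.1 hx).lt_or_eq with hxr | hxr
  · exact hinterior hxr hy hxy
  rcases (mem_closedBall.1 hy).lt_or_eq with hyr | hyr
  · exact (hinterior hyr hx hxy.symm).symm
  exact eq_of_eventually_mem_image_inter hinj (fun V hV ↦ hboundary hxr hV)
    fun V hV ↦ hxy ▸ hboundary hyr hV

theorem injOn_closedBall_of_convex_image_ball [ProperSpace E]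
    (hf : ∀ x ∈ closedBall a r, ContDiffAt ℝ 1 f x)
    (hinv : ∀ x ∈ closedBall a r, (fderiv ℝ f x).IsInvertible)
    (hconv : ∀ s ≤ r, Convex ℝ (f '' ball a s)) :
    InjOn f (closedBall a r) := by
  have hclosed {s : ℝ} (hs : s ≤ r) (hinj : InjOn f (ball a s)) : InjOn f (closedBall a s) :=
    injOn_closedBall_of_injOn_ball (fun x hx ↦ hf x (closedBall_subset_closedBall hs hx))
      (fun x hx ↦ hinv x (closedBall_subset_closedBall hs hx)) (hconv s hs) hinj
  rcases lt_or_ge r 0 with hr | hr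
  · simp [closedBall_eq_empty.2 hr]
  have hradii : Icc 0 r ⊆ {s | InjOn f (ball a s)} := by
    refine ((isClosed_setOf_injOn_ball f a).inter isClosed_Icc).Icc_subset_of_forall_exists_gt
      (by simp) fun s ⟨hs, hsr⟩ t ht ↦ ?_
    have hsub := closedBall_subset_closedBall (x := a) hsr.2.le
    obtain ⟨q, hq, hqinj⟩ := exists_injOn_ball_of_injOn_closedBall (fun x hx ↦ hf x (hsub hx))
      (fun x hx ↦ hinv x (hsub hx)) (hclosed hsr.2.le hs)
    exact ⟨min q t, hqinj.mono (ball_subset_ball (min_le_left _ _)), lt_min hq ht, min_le_right _ _⟩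
  exact hclosed le_rfl (hradii ⟨hr, le_rfl⟩)

end Injectivity

section SecondOrder

open Filter Topology Set RealInnerProductSpace

variable {E F : Type*} [NormedAddCommGroup E] [InnerProductSpace ℝ E]
  [NormedAddCommGroup F] [NormedSpace ℝ F] {f : E → F} {a x v : E}

theorem eventually_parabola_mem_ball (hv : ⟪x - a, v⟫ = 0) {k : ℝ}
    (hk : ‖v‖ ^ 2 < 2 * k * ‖x - a‖ ^ 2) :
    ∀ᶠ t in 𝓝[≠] (0 : ℝ), x + t • v - (t ^ 2 * k) • (x - a) ∈ ball a ‖x - a‖ := by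
  set w := x - a
  have hsmall : ∀ᶠ t in 𝓝 (0 : ℝ), ‖v‖ ^ 2 - 2 * k * ‖w‖ ^ 2 + (t * k * ‖w‖) ^ 2 < 0 := by
    refine ContinuousAt.eventually_lt (by fun_prop) continuousAt_const ?_
    linarith [show (0 * k * ‖w‖) ^ 2 = 0 by ring]
  filter_upwards [nhdsWithin_le_nhds hsmall, self_mem_nhdsWithin] with t ht ht0
  have hsplit : x + t • v - (t ^ 2 * k) • w - a = (1 - t ^ 2 * k) • w + t • v := by
    simp only [w]
    module
  have horth : ⟪(1 - t ^ 2 * k) • w, t • v⟫ = 0 := by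
    rw [inner_smul_left, inner_smul_right, hv, mul_zero, mul_zero]
  have hnorm : ‖x + t • v - (t ^ 2 * k) • w - a‖ ^ 2
      = ‖w‖ ^ 2 + t ^ 2 * (‖v‖ ^ 2 - 2 * k * ‖w‖ ^ 2 + (t * k * ‖w‖) ^ 2) := by
    rw [hsplit, norm_add_sq_real, horth, norm_smul, norm_smul, mul_pow, mul_pow, Real.norm_eq_abs,
      Real.norm_eq_abs, sq_abs, sq_abs]
    ring
  rw [mem_ball_iff_norm]
  refine lt_of_pow_lt_pow_left₀ 2 (norm_nonneg _) ?_
  rw [hnorm]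
  linarith [mul_neg_of_pos_of_neg (sq_pos_of_ne_zero ht0) ht]

theorem fderiv_fderiv_apply_le_of_forall_mem_ball_le (hf : ContDiffAt ℝ 2 f x)
    {l : F →L[ℝ] ℝ} {c : ℝ} (hmax : ∀ z ∈ ball a ‖x - a‖, l (f z) ≤ l (f x))
    (hl : ∀ u, l (fderiv ℝ f x u) = c * ⟪x - a, u⟫) (hv : ⟪x - a, v⟫ = 0) {k : ℝ}
    (hk : ‖v‖ ^ 2 < 2 * k * ‖x - a‖ ^ 2) :
    l (fderiv ℝ (fderiv ℝ f) x v v) ≤ c * (2 * k * ‖x - a‖ ^ 2) := by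
  set γ : ℝ → E := fun t ↦ x + t • v - (t ^ 2 * k) • (x - a)
  have hγ0 : γ 0 = x := by simp [γ]
  have hγ : ContDiff ℝ 2 γ := by fun_prop
  have hγ' : deriv γ = fun t ↦ v - (2 * t * k) • (x - a) := funext fun t ↦ by
    simpa using ((((hasDerivAt_id t).smul_const v).const_add x).fun_sub
      (((hasDerivAt_pow 2 t).mul_const k).smul_const (x - a))).deriv
  have hγ'' : deriv (deriv γ) 0 = -((2 * k) • (x - a)) := by
    rw [hγ']
    simpa using (((((hasDerivAt_id (0 : ℝ)).const_mul 2).mul_const k).smul_const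
      (x - a)).const_sub v).deriv
  have hf0 : ContDiffAt ℝ 2 f (γ 0) := hγ0.symm ▸ hf
  have hfγ : ContDiffAt ℝ 2 (f ∘ γ) 0 := hf0.comp 0 hγ.contDiffAt
  have hlocal : IsLocalMax (l ∘ f ∘ γ) 0 := by
    filter_upwards [eventually_nhdsWithin_iff.1 (eventually_parabola_mem_ball hv hk)] with t ht
    rcases eq_or_ne t 0 with rfl | ht0
    · rfl
    · simpa [hγ0] using hmax _ (ht ht0)
  have hle := deriv_deriv_nonpos_of_isLocalMax hlocal
    (l.contDiff.contDiffAt.comp 0 hfγ).continuousAt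
  have hsecond : deriv (deriv (l ∘ f ∘ γ)) 0
      = l (fderiv ℝ (fderiv ℝ f) x v v) - c * (2 * k * ‖x - a‖ ^ 2) := by
    have hl' : fderiv ℝ l = fun _ ↦ l := funext fun _ ↦ l.fderiv
    rw [deriv_deriv_comp l.contDiff.contDiffAt hfγ, deriv_deriv_comp hf0 hγ.contDiffAt, hγ'', hγ',
      hγ0, hl']
    simp only [Function.comp_apply, fderiv_fun_const, Pi.zero_apply, zero_apply, zero_add, mul_zero,
      zero_mul, zero_smul, sub_zero, map_neg, map_smul, map_add, hl, real_inner_self_eq_norm_sq,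
      smul_eq_mul]
    ring
  exact sub_nonpos.1 (hsecond ▸ hle)

theorem norm_sq_add_inner_lineAcceleration_nonneg (hf : ContDiffAt ℝ 2 f x)
    (hinv : (fderiv ℝ f x).IsInvertible) {l : F →L[ℝ] ℝ} {c : ℝ} (hc : 0 < c)
    (hmax : ∀ z ∈ ball a ‖x - a‖, l (f z) ≤ l (f x))
    (hl : ∀ u, l (fderiv ℝ f x u) = c * ⟪x - a, u⟫) (hxa : x ≠ a) (hv : ⟪x - a, v⟫ = 0) :
    0 ≤ ‖v‖ ^ 2 + ⟪x - a, lineAcceleration f x v⟫ := by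
  have hw : ‖x - a‖ ≠ 0 := norm_ne_zero_iff.2 (sub_ne_zero.2 hxa)
  have hacc : l (fderiv ℝ (fderiv ℝ f) x v v) = c * -⟪x - a, lineAcceleration f x v⟫ := by
    rw [mul_neg, ← hl, lineAcceleration, map_neg, hinv.self_apply_inverse, map_neg, neg_neg]
  rw [← neg_le_iff_add_nonneg]
  refine le_of_forall_gt_imp_ge_of_dense fun K hK ↦ ?_
  have hKw : 2 * (K / (2 * ‖x - a‖ ^ 2)) * ‖x - a‖ ^ 2 = K := by field_simp
  have := fderiv_fderiv_apply_le_of_forall_mem_ball_le hf hmax hl hv (hKw.symm ▸ hK)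
  rw [hacc, hKw] at this
  exact le_of_mul_le_mul_left this hc

end SecondOrder

section AbsoluteConvexity

open Set RealInnerProductSpace

variable {E F : Type*} [NormedAddCommGroup E] [InnerProductSpace ℝ E] [ProperSpace E]
  [NormedAddCommGroup F] [NormedSpace ℝ F] {f : E → F} {U : Set E}

/-- Absolute convexity of `f` on `U`: every open ball whose closed ball lies in `U` has a convex
image. -/
def IsAbsolutelyConvexOn (f : E → F) (U : Set E) : Prop :=
  ∀ a r, closedBall a r ⊆ U → Convex ℝ (f '' ball a r)

theorem IsAbsolutelyConvexOn.norm_sq_add_inner_lineAcceleration_nonneg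
    (hconv : IsAbsolutelyConvexOn f U) (hf : ∀ x ∈ U, ContDiffAt ℝ 2 f x)
    (hinv : ∀ x ∈ U, (fderiv ℝ f x).IsInvertible) {x w v : E}
    (hU : closedBall (x - w) ‖w‖ ⊆ U) (hv : ⟪w, v⟫ = 0) :
    0 ≤ ‖v‖ ^ 2 + ⟪w, lineAcceleration f x v⟫ := by
  obtain ⟨a, rfl⟩ : ∃ a, w = x - a := ⟨x - w, by abel⟩
  rw [sub_sub_cancel] at hU
  rcases eq_or_ne x a with rfl | hxa
  · simp
  have hx : x ∈ closedBall a ‖x - a‖ := mem_closedBall_iff_norm.2 le_rfl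
  have hC1 : ∀ z ∈ closedBall a ‖x - a‖, ContDiffAt ℝ 1 f z := fun z hz ↦
    (hf z (hU hz)).of_le one_le_two
  have hinv' : ∀ z ∈ closedBall a ‖x - a‖, (fderiv ℝ f z).IsInvertible := fun z hz ↦
    hinv z (hU hz)
  have hinj : InjOn f (closedBall a ‖x - a‖) := injOn_closedBall_of_convex_image_ball hC1 hinv'
    fun s hs ↦ hconv a s ((closedBall_subset_closedBall hs).trans hU)
  have hnot : f x ∉ f '' ball a ‖x - a‖ := by
    rw [hinj.mem_image_iff ball_subset_closedBall hx, mem_ball_iff_norm]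
    exact lt_irrefl _
  obtain ⟨l, c, hc, hmax, hl⟩ := exists_supporting_functional (hconv _ _ hU)
    (isOpen_image_ball (fun z hz ↦ hC1 z (ball_subset_closedBall hz))
      fun z hz ↦ hinv' z (ball_subset_closedBall hz))
    hnot ((hC1 x hx).differentiableAt one_ne_zero) (hinv' x hx) hxa
  exact _root_.norm_sq_add_inner_lineAcceleration_nonneg (hf x (hU hx)) (hinv' x hx) hc
    (fun z hz ↦ (hmax z hz).le) hl hxa hv

theorem isAbsolutelyConvexOn_iff (hf : ∀ x ∈ U, ContDiffAt ℝ 2 f x)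
    (hinv : ∀ x ∈ U, (fderiv ℝ f x).IsInvertible) :
    IsAbsolutelyConvexOn f U ↔ ∀ x w, closedBall (x - w) ‖w‖ ⊆ U → ∀ v, ⟪w, v⟫ = 0 →
      0 ≤ ‖v‖ ^ 2 + ⟪w, lineAcceleration f x v⟫ := by
  refine ⟨fun hconv x w hU v hv ↦ hconv.norm_sq_add_inner_lineAcceleration_nonneg hf hinv hU hv,
    fun hnonneg a r hU ↦ ?_⟩
  have hball {x : E} (hx : x ∈ ball a r) : x ∈ U := hU (ball_subset_closedBall hx)
  refine convex_image_ball_of_lineAcceleration_pos (fun x hx ↦ hf x (hball hx))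
    (fun x hx ↦ hinv x (hball hx)) fun x hx hxa v hv hxv ↦ ?_
  rw [mem_ball_iff_norm] at hx
  have hw : 0 < ‖x - a‖ := norm_pos_iff.2 (sub_ne_zero.2 hxa)
  -- The disc through `x` can be enlarged a little, keeping the normal direction at `x`.
  obtain ⟨ε, hε, hεr⟩ : ∃ ε > 0, ‖x - a‖ + 2 * (ε * ‖x - a‖) = r :=
    ⟨(r - ‖x - a‖) / (2 * ‖x - a‖), div_pos (sub_pos.2 hx) (by positivity), by
      field_simp
      ring⟩
  have hsub : closedBall (x - (1 + ε) • (x - a)) ‖(1 + ε) • (x - a)‖ ⊆ closedBall a r := by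
    refine closedBall_subset_closedBall' ?_
    have hcenter : x - (1 + ε) • (x - a) - a = -(ε • (x - a)) := by module
    rw [dist_eq_norm, hcenter, norm_neg, norm_smul, norm_smul, Real.norm_of_nonneg hε.le,
      Real.norm_of_nonneg (by positivity : 0 ≤ 1 + ε)]
    linarith
  have hle := hnonneg x _ (hsub.trans hU) v (by rw [real_inner_smul_left, hxv, mul_zero])
  rw [real_inner_smul_left] at hle
  have hv2 : 0 < ‖v‖ ^ 2 := pow_pos (norm_pos_iff.2 hv) 2
  refine pos_of_mul_pos_right (a := 1 + ε) ?_ (by positivity)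
  linarith [mul_pos hε hv2]

end AbsoluteConvexity

section HarmonicMap

open Filter Topology Set RealInnerProductSpace

variable {h g : ℂ → ℂ} {z : ℂ}

theorem fderiv_add_conj_apply (hh : DifferentiableAt ℂ h z) (hg : DifferentiableAt ℂ g z) (v : ℂ) :
    fderiv ℝ (fun z ↦ h z + conj (g z)) z v = deriv h z * v + conj (deriv g z * v) := by
  have hd := hh.hasDerivAt.complexToReal_fderiv.add
    (conjCLE.hasFDerivAt.comp z hg.hasDerivAt.complexToReal_fderiv)
  exact congr($(hd.fderiv) v).trans (by simp)

theorem contDiffAt_add_conj (hh : AnalyticAt ℂ h z) (hg : AnalyticAt ℂ g z) {n : WithTop ℕ∞} :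
    ContDiffAt ℝ n (fun z ↦ h z + conj (g z)) z :=
  (hh.contDiffAt.restrict_scalars ℝ).add
    (conjCLE.contDiff.contDiffAt.comp z (hg.contDiffAt.restrict_scalars ℝ))

theorem fderiv_fderiv_add_conj_apply (hh : AnalyticAt ℂ h z) (hg : AnalyticAt ℂ g z) (u v : ℂ) :
    fderiv ℝ (fderiv ℝ fun z ↦ h z + conj (g z)) z u v
      = deriv (deriv h) z * u * v + conj (deriv (deriv g) z * u * v) := by
  have hfv : (fun y ↦ fderiv ℝ (fun z ↦ h z + conj (g z)) y v)
      =ᶠ[𝓝 z] fun y ↦ deriv h y * v + conj (deriv g y * v) := by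
    filter_upwards [hh.eventually_analyticAt, hg.eventually_analyticAt] with y hy hy'
    exact fderiv_add_conj_apply hy.differentiableAt hy'.differentiableAt v
  have hd : DifferentiableAt ℝ (fderiv ℝ fun z ↦ h z + conj (g z)) z :=
    ((contDiffAt_add_conj hh hg).fderiv_right (m := 1) (n := 2) le_rfl).differentiableAt one_ne_zero
  have hswap := fderiv_clm_apply hd (differentiableAt_const v)
  have hh' := hh.deriv.differentiableAt
  have hg' := hg.deriv.differentiableAt
  rw [hfv.fderiv_eq] at hswap
  have := congr($hswap u)
  rw [fderiv_add_conj_apply (hh'.mul_const v) (hg'.mul_const v), deriv_mul_const hh',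
    deriv_mul_const hg'] at this
  simpa [mul_right_comm] using this.symm

theorem isInvertible_fderiv_add_conj (hh : DifferentiableAt ℂ h z) (hg : DifferentiableAt ℂ g z)
    (hlt : ‖deriv g z‖ < ‖deriv h z‖) :
    (fderiv ℝ (fun z ↦ h z + conj (g z)) z).IsInvertible := by
  set L := fderiv ℝ (fun z ↦ h z + conj (g z)) z
  have hinj : Function.Injective L.toLinearMap := by
    refine (injective_iff_map_eq_zero L.toLinearMap).2 fun v hv ↦ ?_
    have hsum : deriv h z * v + conj (deriv g z * v) = 0 :=
      (fderiv_add_conj_apply hh hg v).symm.trans hv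
    have hnorm : ‖deriv h z‖ * ‖v‖ = ‖deriv g z‖ * ‖v‖ := by
      rw [← norm_mul, eq_neg_of_add_eq_zero_left hsum, norm_neg, norm_conj, norm_mul]
    by_contra hv0
    exact hlt.ne' (mul_right_cancel₀ (norm_ne_zero_iff.2 hv0) hnorm)
  exact ⟨(LinearEquiv.ofInjectiveEndo _ hinj).toContinuousLinearEquiv, rfl⟩

end HarmonicMap

section CircleCurvature

open Set RealInnerProductSpace

variable {h g : ℂ → ℂ} {ζ w : ℂ}

/-- The numerator `Im (conj (φ' 0) * φ'' 0)` of the signed curvature at `θ = 0` of the image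
`φ θ = f (ζ - w + w * exp (θ * I))` of a circle through `ζ` under `f = h + conj g`. -/
def circleCurvatureNum (h g : ℂ → ℂ) (ζ w : ℂ) : ℝ :=
  (conj (w * deriv h ζ - conj (w * deriv g ζ)) *
    (w * deriv h ζ + w ^ 2 * deriv (deriv h) ζ
      + conj (w * deriv g ζ + w ^ 2 * deriv (deriv g) ζ))).re

theorem circleCurvatureNum_eq (h g : ℂ → ℂ) (ζ w : ℂ) :
    circleCurvatureNum h g ζ w = ‖w‖ ^ 2 * (‖deriv h ζ‖ ^ 2 - ‖deriv g ζ‖ ^ 2)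
      + (‖w‖ ^ 2 * ((w * deriv (deriv h) ζ * conj (deriv h ζ)).re
          - (w * deriv (deriv g) ζ * conj (deriv g ζ)).re)
        - (w ^ 3 * (deriv (deriv h) ζ * deriv g ζ - deriv h ζ * deriv (deriv g) ζ)).re) := by
  simp only [circleCurvatureNum, ← normSq_eq_norm_sq]
  simp only [normSq_apply, pow_succ, pow_zero, one_mul, map_add, map_sub, map_mul, conj_conj,
    add_re, add_im, sub_re, sub_im, mul_re, mul_im, conj_re, conj_im]
  ring

theorem circleCurvatureNum_nonneg_iff_of_eq_real_mul {s : ℝ} (hs : 0 < s) {u : ℂ}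
    (hu : u = s * w) :
    0 ≤ circleCurvatureNum h g ζ w ↔
      ‖u‖ ^ 2 * ‖deriv g ζ‖ ^ 2 * s + ‖u‖ ^ 2 * (u * deriv (deriv g) ζ * conj (deriv g ζ)).re
        + (u ^ 3 * (deriv (deriv h) ζ * deriv g ζ - deriv h ζ * deriv (deriv g) ζ)).re
      ≤ ‖u‖ ^ 2 * ‖deriv h ζ‖ ^ 2 * s
        + ‖u‖ ^ 2 * (u * deriv (deriv h) ζ * conj (deriv h ζ)).re := by
  rw [← mul_nonneg_iff_of_pos_left (pow_pos hs 3), circleCurvatureNum_eq, ← sub_nonneg (b := _ + _)]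
  refine Iff.of_eq (congrArg (0 ≤ ·) ?_)
  rw [hu, norm_mul, norm_real, Real.norm_of_nonneg hs.le, mul_pow (s : ℂ), ← ofReal_pow]
  simp only [mul_assoc, re_ofReal_mul]
  ring

theorem exists_eq_real_mul_I_mul (hw : w ≠ 0) {v : ℂ} (hv : ⟪w, v⟫ = 0) :
    ∃ κ : ℝ, v = κ * I * w := by
  have hratio : (v / w).re = 0 := by
    rw [Complex.inner, mul_re, conj_re, conj_im, mul_neg, sub_neg_eq_add] at hv
    rw [div_re, ← add_div, hv, zero_div]
  refine ⟨(v / w).im, ?_⟩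
  rw [← zero_add ((v / w).im * I), ← ofReal_zero, ← hratio, re_add_im, div_mul_cancel₀ _ hw]

theorem inner_lineAcceleration_add_conj (hh : AnalyticAt ℂ h ζ) (hg : AnalyticAt ℂ g ζ)
    (hlt : ‖deriv g ζ‖ < ‖deriv h ζ‖) (w v : ℂ) :
    (‖deriv h ζ‖ ^ 2 - ‖deriv g ζ‖ ^ 2)
        * ⟪w, lineAcceleration (fun z ↦ h z + conj (g z)) ζ v⟫ =
      -(conj (w * deriv h ζ - conj (w * deriv g ζ))
        * (v ^ 2 * deriv (deriv h) ζ + conj (v ^ 2 * deriv (deriv g) ζ))).re := by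
  set u := lineAcceleration (fun z ↦ h z + conj (g z)) ζ v with hu
  have hacc : deriv h ζ * u + conj (deriv g ζ * u)
      = -(deriv (deriv h) ζ * v * v + conj (deriv (deriv g) ζ * v * v)) := by
    rw [← fderiv_add_conj_apply hh.differentiableAt hg.differentiableAt, hu, lineAcceleration,
      map_neg, (isInvertible_fderiv_add_conj hh.differentiableAt hg.differentiableAt
        hlt).self_apply_inverse, fderiv_fderiv_add_conj_apply hh hg]
  have hsub : v ^ 2 * deriv (deriv h) ζ + conj (v ^ 2 * deriv (deriv g) ζ)
      = -(deriv h ζ * u + conj (deriv g ζ * u)) := by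
    rw [hacc, neg_neg]
    simp only [map_mul, map_pow]
    ring
  rw [hsub, Complex.inner]
  simp only [← normSq_eq_norm_sq, normSq_apply, map_sub, map_mul, conj_conj, add_re, add_im, sub_re,
    sub_im, neg_re, neg_im, mul_re, mul_im, conj_re, conj_im]
  ring

theorem jacobian_mul_norm_sq_add_inner_lineAcceleration (hh : AnalyticAt ℂ h ζ)
    (hg : AnalyticAt ℂ g ζ) (hlt : ‖deriv g ζ‖ < ‖deriv h ζ‖) (w : ℂ) (κ : ℝ) :
    (‖deriv h ζ‖ ^ 2 - ‖deriv g ζ‖ ^ 2) * (‖κ * I * w‖ ^ 2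
        + ⟪w, lineAcceleration (fun z ↦ h z + conj (g z)) ζ (κ * I * w)⟫)
      = κ ^ 2 * circleCurvatureNum h g ζ w := by
  rw [mul_add, inner_lineAcceleration_add_conj hh hg hlt, circleCurvatureNum]
  simp only [← normSq_eq_norm_sq]
  simp only [normSq_apply, pow_succ, pow_zero, one_mul, map_sub, map_mul, conj_conj, conj_ofReal,
    conj_I, add_re, add_im, sub_re, sub_im, neg_re, neg_im, mul_re, mul_im, conj_re, conj_im,
    ofReal_re, ofReal_im, I_re, I_im]
  ring

theorem forall_inner_lineAcceleration_nonneg_iff (hh : AnalyticAt ℂ h ζ) (hg : AnalyticAt ℂ g ζ)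
    (hlt : ‖deriv g ζ‖ < ‖deriv h ζ‖) (w : ℂ) :
    (∀ v, ⟪w, v⟫ = 0 → 0 ≤ ‖v‖ ^ 2 + ⟪w, lineAcceleration (fun z ↦ h z + conj (g z)) ζ v⟫)
      ↔ 0 ≤ circleCurvatureNum h g ζ w := by
  have hjac : 0 < ‖deriv h ζ‖ ^ 2 - ‖deriv g ζ‖ ^ 2 :=
    sub_pos.2 (pow_lt_pow_left₀ hlt (norm_nonneg _) two_ne_zero)
  have hkey := jacobian_mul_norm_sq_add_inner_lineAcceleration hh hg hlt w
  constructor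
  · intro hnonneg
    have horth : ⟪w, ((1 : ℝ) : ℂ) * I * w⟫ = 0 := by
      simp only [Complex.inner, mul_re, mul_im, conj_re, conj_im, ofReal_re, ofReal_im, I_re, I_im]
      ring
    simpa using (mul_nonneg hjac.le (hnonneg _ horth)).trans_eq (hkey 1)
  · intro hnonneg v hv
    rcases eq_or_ne w 0 with rfl | hw
    · simp
    obtain ⟨κ, rfl⟩ := exists_eq_real_mul_I_mul hw hv
    exact nonneg_of_mul_nonneg_right
      ((mul_nonneg (sq_nonneg κ) hnonneg).trans_eq (hkey κ).symm) hjac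

theorem isAbsolutelyConvexOn_add_conj_iff {U : Set ℂ} (hU : IsOpen U)
    (hh : DifferentiableOn ℂ h U) (hg : DifferentiableOn ℂ g U)
    (hlt : ∀ z ∈ U, ‖deriv g z‖ < ‖deriv h z‖) :
    IsAbsolutelyConvexOn (fun z ↦ h z + conj (g z)) U ↔
      ∀ ζ w, closedBall (ζ - w) ‖w‖ ⊆ U → 0 ≤ circleCurvatureNum h g ζ w := by
  have hh' : ∀ z ∈ U, AnalyticAt ℂ h z := fun z hz ↦ hh.analyticAt (hU.mem_nhds hz)
  have hg' : ∀ z ∈ U, AnalyticAt ℂ g z := fun z hz ↦ hg.analyticAt (hU.mem_nhds hz)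
  rw [isAbsolutelyConvexOn_iff (fun z hz ↦ contDiffAt_add_conj (hh' z hz) (hg' z hz))
    fun z hz ↦ isInvertible_fderiv_add_conj (hh' z hz).differentiableAt
      (hg' z hz).differentiableAt (hlt z hz)]
  refine forall₃_congr fun ζ w hsub ↦ ?_
  have hζ : ζ ∈ U := hsub (by simp)
  exact forall_inner_lineAcceleration_nonneg_iff (hh' ζ hζ) (hg' ζ hζ) (hlt ζ hζ) w

end CircleCurvature

section UnitBall

variable {E : Type*} [NormedAddCommGroup E] [NormedSpace ℝ E]

theorem closedBall_subset_ball_zero_iff [Nontrivial E] {a : E} {r R : ℝ} (hr : 0 ≤ r) :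
    closedBall a r ⊆ ball 0 R ↔ ‖a‖ + r < R := by
  refine ⟨fun hsub ↦ ?_, fun hlt ↦ closedBall_subset_ball' (by rwa [dist_zero_right, add_comm])⟩
  obtain ⟨x, hx, hax⟩ : ∃ x : E, ‖x‖ = r ∧ ‖a + x‖ = ‖a‖ + r := by
    rcases eq_or_ne a 0 with rfl | ha
    · simpa using exists_norm_eq E hr
    · have hnorm : ‖(r / ‖a‖) • a‖ = r := by
        rw [norm_smul, Real.norm_of_nonneg (by positivity),
          div_mul_cancel₀ _ (norm_ne_zero_iff.2 ha)]
      refine ⟨(r / ‖a‖) • a, hnorm, ?_⟩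
      rw [(SameRay.sameRay_nonneg_smul_right a (by positivity)).norm_add, hnorm]
  simpa [hax] using hsub (show a + x ∈ closedBall a r by simp [hx])

theorem isAbsolutelyConvexOn_unitBall_iff [Nontrivial E] {F : Type*} [NormedAddCommGroup F]
    [NormedSpace ℝ F] (f : E → F) : IsAbsolutelyConvexOn f (ball 0 1) ↔
      ∀ a ∈ ball (0 : E) 1, ∀ r, 0 < r → r < 1 - ‖a‖ → Convex ℝ (f '' ball a r) := by
  refine ⟨fun hconv a _ r hr hra ↦ hconv a r ?_, fun hconv a r hsub ↦ ?_⟩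
  · exact (closedBall_subset_ball_zero_iff hr.le).2 (lt_sub_iff_add_lt'.1 hra)
  · rcases le_or_gt r 0 with hr | hr
    · simpa [ball_eq_empty.2 hr] using convex_empty
    · exact hconv a (hsub (mem_closedBall_self hr.le)) r hr
        (lt_sub_iff_add_lt'.2 ((closedBall_subset_ball_zero_iff hr.le).1 hsub))

end UnitBall

section HyperbolicCircle

variable {ζ b w : ℂ}

/-- The radius vector `ζ - a`, where `a` is the Euclidean centre of the hyperbolic circle through
`ζ` with hyperbolic centre `b` in the unit disc. -/
def hyperbolicCircleRadius (ζ b : ℂ) : ℂ :=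
  (ζ - b) * (1 - ζ * conj b) / (1 + ‖b‖ ^ 2 - 2 * (conj b * ζ).re : ℝ)

theorem one_add_norm_sq_sub_pos (hζ : ‖ζ‖ < 1) (hb : ‖b‖ < 1) :
    0 < 1 + ‖b‖ ^ 2 - 2 * (conj b * ζ).re := by
  have hre : (conj b * ζ).re ≤ ‖b‖ := calc
    (conj b * ζ).re ≤ ‖b‖ * ‖ζ‖ := by simpa using re_le_norm (conj b * ζ)
    _ ≤ ‖b‖ := mul_le_of_le_one_right (norm_nonneg b) hζ.le
  linarith [pow_pos (sub_pos.2 hb) 2]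

theorem real_mul_sub_sub_mul_one_sub_mul_conj (ζ b : ℂ) :
    (1 + ‖b‖ ^ 2 - 2 * (conj b * ζ).re : ℝ) * ζ - (ζ - b) * (1 - ζ * conj b)
      = (1 - ‖ζ‖ ^ 2 : ℝ) * b := by
  apply Complex.ext <;>
  · simp only [← normSq_eq_norm_sq, normSq_apply, sub_re, sub_im, mul_re, mul_im, conj_re, conj_im,
      ofReal_re, ofReal_im, one_re, one_im]
    ring

theorem norm_sub_sq_eq (ζ b : ℂ) :
    ‖ζ - b‖ ^ 2 = 1 + ‖b‖ ^ 2 - 2 * (conj b * ζ).re - (1 - ‖ζ‖ ^ 2) := by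
  simp only [← normSq_eq_norm_sq, normSq_apply, sub_re, sub_im, mul_re, conj_re, conj_im]
  ring

theorem norm_one_sub_mul_conj_sq_eq (ζ b : ℂ) :
    ‖1 - ζ * conj b‖ ^ 2 = 1 + ‖b‖ ^ 2 - 2 * (conj b * ζ).re - ‖b‖ ^ 2 * (1 - ‖ζ‖ ^ 2) := by
  simp only [← normSq_eq_norm_sq, normSq_apply, sub_re, sub_im, one_re, one_im, mul_re, mul_im,
    conj_re, conj_im]
  ring

theorem sub_hyperbolicCircleRadius (hζ : ‖ζ‖ < 1) (hb : ‖b‖ < 1) :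
    ζ - hyperbolicCircleRadius ζ b
      = (1 - ‖ζ‖ ^ 2 : ℝ) * b / (1 + ‖b‖ ^ 2 - 2 * (conj b * ζ).re : ℝ) := by
  have hk : ((1 + ‖b‖ ^ 2 - 2 * (conj b * ζ).re : ℝ) : ℂ) ≠ 0 :=
    ofReal_ne_zero.2 (one_add_norm_sq_sub_pos hζ hb).ne'
  rw [eq_div_iff hk, ← real_mul_sub_sub_mul_one_sub_mul_conj, sub_mul, hyperbolicCircleRadius,
    div_mul_cancel₀ _ hk, mul_comm]

theorem norm_sub_add_norm_hyperbolicCircleRadius_lt_one (hζ : ‖ζ‖ < 1) (hb : ‖b‖ < 1) :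
    ‖ζ - hyperbolicCircleRadius ζ b‖ + ‖hyperbolicCircleRadius ζ b‖ < 1 := by
  have hk := one_add_norm_sq_sub_pos hζ hb
  have hm : 0 < 1 - ‖ζ‖ ^ 2 := sub_pos.2 (pow_lt_one₀ (norm_nonneg ζ) hζ two_ne_zero)
  have hX := norm_sub_sq_eq ζ b
  have hY := norm_one_sub_mul_conj_sq_eq ζ b
  rw [sub_hyperbolicCircleRadius hζ hb, hyperbolicCircleRadius, norm_div, norm_div, norm_mul,
    norm_mul, norm_real, norm_real, Real.norm_of_nonneg hm.le, Real.norm_of_nonneg hk.le,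
    ← add_div, div_lt_one hk]
  set k := 1 + ‖b‖ ^ 2 - 2 * (conj b * ζ).re
  set m := 1 - ‖ζ‖ ^ 2
  have hmk : m ≤ k := sub_nonneg.1 (hX ▸ sq_nonneg _)
  have hkm : 0 ≤ k - m * ‖b‖ := by linarith [mul_le_of_le_one_right hm.le hb.le]
  have hsq : (‖ζ - b‖ * ‖1 - ζ * conj b‖) ^ 2 < (k - m * ‖b‖) ^ 2 := by
    have hgap : 0 < k * m * (1 - ‖b‖) ^ 2 := mul_pos (mul_pos hk hm) (pow_pos (sub_pos.2 hb) 2)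
    rw [mul_pow, hX, hY]
    linarith
  linarith [lt_of_pow_lt_pow_left₀ 2 hkm hsq]

theorem exists_quadratic_root {α β : ℝ} (hα : 0 ≤ α) (hαβ : 2 * α < β) :
    ∃ s, 0 ≤ s ∧ s * α < 1 ∧ (s * α) ^ 2 - s * β + 1 = 0 := by
  set D := √(β ^ 2 - (2 * α) ^ 2)
  have hD : 0 ≤ D := Real.sqrt_nonneg _
  have hD2 : D ^ 2 = β ^ 2 - (2 * α) ^ 2 :=
    Real.sq_sqrt (sub_nonneg.2 (pow_le_pow_left₀ (by positivity) hαβ.le 2))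
  have hβD : 0 < β + D := by linarith
  refine ⟨2 / (β + D), by positivity, ?_, ?_⟩
  · rw [div_mul_eq_mul_div, div_lt_one hβD]
    linarith
  · field_simp
    linear_combination hD2

theorem exists_hyperbolicCircleRadius_eq (hlt : ‖ζ - w‖ + ‖w‖ < 1) :
    ∃ b, ‖b‖ < 1 ∧ hyperbolicCircleRadius ζ b = w := by
  obtain ⟨a, rfl⟩ : ∃ a, w = ζ - a := ⟨ζ - w, by ring⟩
  rw [sub_sub_cancel] at hlt
  have hζ : ‖ζ‖ < 1 := by linarith [norm_sub_norm_le ζ a]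
  have hroot : 2 * ‖a‖ < 1 + ‖a‖ ^ 2 - ‖ζ - a‖ ^ 2 := by
    linarith [pow_lt_pow_left₀ (lt_sub_iff_add_lt'.2 hlt) (norm_nonneg _) two_ne_zero]
  obtain ⟨s, hs, hsa, hquad⟩ := exists_quadratic_root (norm_nonneg a) hroot
  have hnorm : ‖s * a‖ = s * ‖a‖ := by rw [norm_mul, norm_real, Real.norm_of_nonneg hs]
  have hb : ‖s * a‖ < 1 := hnorm.trans_lt hsa
  refine ⟨s * a, hb, ?_⟩
  have hk : 1 + ‖s * a‖ ^ 2 - 2 * (conj (s * a) * ζ).re = s * (1 - ‖ζ‖ ^ 2) := by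
    have hpolar : 2 * (conj (s * a) * ζ).re = s * (‖a‖ ^ 2 + ‖ζ‖ ^ 2 - ‖ζ - a‖ ^ 2) := by
      simp only [← normSq_eq_norm_sq, normSq_apply, map_mul, conj_ofReal, sub_re, sub_im, mul_re,
        mul_im, conj_re, conj_im, ofReal_re, ofReal_im]
      ring
    rw [hpolar, hnorm]
    linear_combination hquad
  have hk0 := hk ▸ (one_add_norm_sq_sub_pos hζ hb).ne'
  rw [← sub_right_inj (a := ζ), sub_hyperbolicCircleRadius hζ hb, hk, sub_sub_cancel,
    div_eq_iff (ofReal_ne_zero.2 hk0)]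
  push_cast
  ring

theorem forall_norm_sub_add_norm_lt_one_iff {P : ℂ → ℂ → Prop} :
    (∀ ζ w, ‖ζ - w‖ + ‖w‖ < 1 → P ζ w) ↔
      ∀ ζ ∈ ball (0 : ℂ) 1, ∀ b ∈ ball (0 : ℂ) 1, P ζ (hyperbolicCircleRadius ζ b) := by
  simp only [mem_ball_zero_iff]
  refine ⟨fun hP ζ hζ b hb ↦ hP _ _ (norm_sub_add_norm_hyperbolicCircleRadius_lt_one hζ hb),
    fun hP ζ w hlt ↦ ?_⟩
  have hζ : ‖ζ‖ < 1 := by simpa using (norm_add_le (ζ - w) w).trans_lt hlt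
  obtain ⟨b, hb, rfl⟩ := exists_hyperbolicCircleRadius_eq hlt
  exact hP ζ hζ b hb

theorem circleCurvatureNum_hyperbolicCircleRadius_nonneg_iff (h g : ℂ → ℂ) (hζ : ‖ζ‖ < 1)
    (hb : ‖b‖ < 1) :
    0 ≤ circleCurvatureNum h g ζ (hyperbolicCircleRadius ζ b) ↔
      ‖ζ - b‖ ^ 2 * ‖1 - ζ * conj b‖ ^ 2 * ‖deriv g ζ‖ ^ 2
          * (1 + ‖b‖ ^ 2 - 2 * (conj b * ζ).re)
        + ‖ζ - b‖ ^ 2 * ‖1 - ζ * conj b‖ ^ 2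
          * ((ζ - b) * (1 - ζ * conj b) * deriv (deriv g) ζ * conj (deriv g ζ)).re
        + ((ζ - b) ^ 3 * (1 - ζ * conj b) ^ 3
          * (deriv (deriv h) ζ * deriv g ζ - deriv h ζ * deriv (deriv g) ζ)).re
      ≤ ‖ζ - b‖ ^ 2 * ‖1 - ζ * conj b‖ ^ 2 * ‖deriv h ζ‖ ^ 2
          * (1 + ‖b‖ ^ 2 - 2 * (conj b * ζ).re)
        + ‖ζ - b‖ ^ 2 * ‖1 - ζ * conj b‖ ^ 2
          * ((ζ - b) * (1 - ζ * conj b) * deriv (deriv h) ζ * conj (deriv h ζ)).re := by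
  have hk := one_add_norm_sq_sub_pos hζ hb
  have hradius : (ζ - b) * (1 - ζ * conj b)
      = (1 + ‖b‖ ^ 2 - 2 * (conj b * ζ).re : ℝ) * hyperbolicCircleRadius ζ b :=
    (mul_div_cancel₀ _ (ofReal_ne_zero.2 hk.ne')).symm
  rw [circleCurvatureNum_nonneg_iff_of_eq_real_mul hk hradius, norm_mul, mul_pow, mul_pow]

end HyperbolicCircle

/-- For a sense-preserving harmonic function `f = h + conj g` on the unit
disk, absolute convexity (condition (i)) is equivalent to the analytic condition (iii). -/
theorem absolutelyConvex_iff (h g : ℂ → ℂ)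
    (hh : DifferentiableOn ℂ h (ball (0:ℂ) 1))
    (hg : DifferentiableOn ℂ g (ball (0:ℂ) 1))
    (hsp : ∀ z ∈ ball (0:ℂ) 1, ‖deriv g z‖ < ‖deriv h z‖) :
    (∀ a ∈ ball (0:ℂ) 1, ∀ r : ℝ, 0 < r → r < 1 - ‖a‖ →
        Convex ℝ ((fun z => h z + conj (g z)) '' ball a r))
    ↔
    (∀ ζ ∈ ball (0:ℂ) 1, ∀ b ∈ ball (0:ℂ) 1,
      ‖ζ - b‖ ^ 2 * ‖1 - ζ * conj b‖ ^ 2 * ‖deriv g ζ‖ ^ 2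
          * (1 + ‖b‖ ^ 2 - 2 * (conj b * ζ).re)
        + ‖ζ - b‖ ^ 2 * ‖1 - ζ * conj b‖ ^ 2
          * ((ζ - b) * (1 - ζ * conj b) * deriv (deriv g) ζ * conj (deriv g ζ)).re
        + ((ζ - b) ^ 3 * (1 - ζ * conj b) ^ 3
          * (deriv (deriv h) ζ * deriv g ζ - deriv h ζ * deriv (deriv g) ζ)).re
      ≤ ‖ζ - b‖ ^ 2 * ‖1 - ζ * conj b‖ ^ 2 * ‖deriv h ζ‖ ^ 2
          * (1 + ‖b‖ ^ 2 - 2 * (conj b * ζ).re)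
        + ‖ζ - b‖ ^ 2 * ‖1 - ζ * conj b‖ ^ 2
          * ((ζ - b) * (1 - ζ * conj b) * deriv (deriv h) ζ * conj (deriv h ζ)).re) := by
  calc
    _ ↔ IsAbsolutelyConvexOn (fun z ↦ h z + conj (g z)) (ball 0 1) :=
      (isAbsolutelyConvexOn_unitBall_iff _).symm
    _ ↔ ∀ ζ w, closedBall (ζ - w) ‖w‖ ⊆ ball 0 1 → 0 ≤ circleCurvatureNum h g ζ w :=
      isAbsolutelyConvexOn_add_conj_iff isOpen_ball hh hg hsp
    _ ↔ ∀ ζ w, ‖ζ - w‖ + ‖w‖ < 1 → 0 ≤ circleCurvatureNum h g ζ w := by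
      simp only [closedBall_subset_ball_zero_iff (norm_nonneg _)]
    _ ↔ ∀ ζ ∈ ball (0 : ℂ) 1, ∀ b ∈ ball (0 : ℂ) 1,
        0 ≤ circleCurvatureNum h g ζ (hyperbolicCircleRadius ζ b) :=
      forall_norm_sub_add_norm_lt_one_iff
    _ ↔ _ := forall₄_congr fun ζ hζ b hb ↦ circleCurvatureNum_hyperbolicCircleRadius_nonneg_iff h g
      (mem_ball_zero_iff.1 hζ) (mem_ball_zero_iff.1 hb)
end
end

section
/- Let f = h + \overline{g} \in \mathcal{AK}^0_H with Taylor coefficients a_2 = h''(0)/2 and b_2 = g''(0)/2. If a_2 is a nonnegative real number, then a_2 + \mathrm{Re}\, b_2 \leq 1. -/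
open Complex Metric ComplexConjugate

noncomputable section

/-!
Let `D` be a disc with `0 ∈ ∂D` and `closure D ⊆ 𝔻`. Every smaller concentric disc has convex image
under the local homeomorphism `f`, which forces `f` to be injective on `closure D`: the radii for
which this holds form an interval that cannot stop. Hence `f 0` is a boundary point of the convex
set `f '' D`, and since the differential of `f` at `0` is the identity, `f '' D` lies in the
half-plane through `f 0` that is tangent to `D` at `0`. For `D = D(ρω, ρ)` with `|ω| = 1` this says
that the real part of `conj ω * h + ω * g` attains its minimum over `closure D` at `0`; the second
derivative test along `∂D` then gives `Re (ω a₂ + ω³ b₂) ≤ 1 / (2ρ)`, and `ρ` may be arbitrarily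
close to `1 / 2`.
-/

open Filter Topology Set InnerProductSpace

section LocalHomeomorph

variable {X Y : Type*} [TopologicalSpace X] [TopologicalSpace Y] {f : X → Y} {s : Set X}

theorem isOpen_image_of_isLocalHomeomorphOn (hf : IsLocalHomeomorphOn f s) (hs : IsOpen s) :
    IsOpen (f '' s) := by
  rw [isOpen_iff_mem_nhds]
  rintro _ ⟨x, hx, rfl⟩
  exact hf.map_nhds_eq hx ▸ image_mem_map (hs.mem_nhds hx)

theorem exists_mem_nhds_injOn_of_isLocalHomeomorphOn (hf : IsLocalHomeomorphOn f s) {x : X}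
    (hx : x ∈ s) : ∃ u ∈ 𝓝 x, InjOn f u := by
  obtain ⟨e, hxe, rfl⟩ := hf x hx
  exact ⟨e.source, e.open_source.mem_nhds hxe, e.injOn⟩

theorem exists_source_subset_of_isLocalHomeomorphOn (hf : IsLocalHomeomorphOn f s) {x : X}
    (hx : x ∈ s) {N : Set X} (hN : N ∈ 𝓝 x) :
    ∃ e : OpenPartialHomeomorph X Y, x ∈ e.source ∧ e.source ⊆ N ∧ f = e := by
  obtain ⟨e, hxe, rfl⟩ := hf x hx
  exact ⟨e.restr N, by simpa [hxe] using mem_interior_iff_mem_nhds.2 hN,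
    (e.restr_source N).trans_subset (inter_subset_right.trans interior_subset), rfl⟩

theorem subset_source_of_isPreconnected_image [T2Space X] {e : OpenPartialHomeomorph X Y}
    (hs : IsOpen s) (he : IsLocalHomeomorphOn e s) (hinj : InjOn e s) (hmaps : MapsTo e s e.target)
    (hpre : IsPreconnected (e '' s)) (hne : (s ∩ e.source).Nonempty) : s ⊆ e.source := by
  have hdiff : s \ e.source = s ∩ {x | e.symm (e x) ≠ x} := by
    ext x
    refine and_congr_right fun hx => not_congr ⟨e.left_inv, fun h => ?_⟩
    exact h ▸ e.map_target (hmaps hx)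
  have hopen_diff : IsOpen (s \ e.source) := by
    have hcont : ContinuousOn (fun x => (e.symm (e x), x)) s :=
      (e.continuousOn_symm.comp he.continuousOn hmaps).prodMk continuousOn_id
    exact hdiff ▸ hcont.isOpen_inter_preimage hs isClosed_diagonal.isOpen_compl
  have hdisj : Disjoint (e '' (s ∩ e.source)) (e '' (s \ e.source)) := by
    rw [disjoint_iff_inter_eq_empty, ← hinj.image_inter inter_subset_left sdiff_subset]
    simp [inter_assoc]
  by_contra hsub
  obtain ⟨p, -, hp, hp'⟩ := hpre _ _
    (isOpen_image_of_isLocalHomeomorphOn (he.mono inter_subset_left) (hs.inter e.open_source))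
    (isOpen_image_of_isLocalHomeomorphOn (he.mono sdiff_subset) hopen_diff)
    (by rw [← image_union, inter_union_sdiff])
    ((hne.image e).mono (subset_inter (image_mono inter_subset_left) Subset.rfl))
    (((sdiff_nonempty.2 hsub).image e).mono (subset_inter (image_mono sdiff_subset) Subset.rfl))
  exact disjoint_left.1 hdisj hp hp'

end LocalHomeomorph

theorem isLocalHomeomorphOn_of_hasStrictFDerivAt_equiv {𝕜 E F : Type*} [NontriviallyNormedField 𝕜]
    [NormedAddCommGroup E] [NormedSpace 𝕜 E] [CompleteSpace E]
    [NormedAddCommGroup F] [NormedSpace 𝕜 F] {f : E → F} {s : Set E}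
    (hf : ∀ x ∈ s, ∃ L : E ≃L[𝕜] F, HasStrictFDerivAt f (L : E →L[𝕜] F) x) :
    IsLocalHomeomorphOn f s := by
  intro x hx
  obtain ⟨L, hL⟩ := hf x hx
  exact ⟨hL.toOpenPartialHomeomorph f, hL.mem_toOpenPartialHomeomorph_source, rfl⟩

section ConvexImage

variable {F : Type*} [NormedAddCommGroup F] [NormedSpace ℝ F]

theorem injOn_closure_of_convex_image {X : Type*} [TopologicalSpace X] [T2Space X] {f : X → F}
    {s : Set X} (hf : IsLocalHomeomorphOn f (closure s)) (hs : IsOpen s) (hinj : InjOn f s)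
    (hconv : Convex ℝ (f '' s)) : InjOn f (closure s) := by
  intro z hz w hw hzw
  by_contra hne
  obtain ⟨N, M, hN, hM, hzN, hwM, hNM⟩ := t2_separation hne
  obtain ⟨e, hze, heN, rfl⟩ := exists_source_subset_of_isLocalHomeomorphOn hf hz (hN.mem_nhds hzN)
  obtain ⟨ε, hε, hεe⟩ := Metric.isOpen_iff.1 e.open_target (e z) (e.map_source hze)
  have hV : ball (e z) ε ∈ 𝓝 (e z) := ball_mem_nhds _ hε
  have hfs : IsLocalHomeomorphOn e s := hf.mono subset_closure
  set D := s ∩ e ⁻¹' ball (e z) ε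
  have hD : IsOpen D := hfs.continuousOn.isOpen_inter_preimage hs isOpen_ball
  have hpre : IsPreconnected (e '' D) := by
    rw [image_inter_preimage]
    exact (hconv.inter (convex_ball _ _)).isPreconnected
  have hDz : (D ∩ e.source).Nonempty := by
    obtain ⟨x, ⟨hxe, hxV⟩, hxs⟩ := mem_closure_iff_nhds.1 hz _
      (inter_mem (e.open_source.mem_nhds hze) (hf.continuousAt hz hV))
    exact ⟨x, ⟨hxs, hxV⟩, hxe⟩
  have hDN : D ⊆ N := (subset_source_of_isPreconnected_image hD (hfs.mono inter_subset_left)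
    (hinj.mono inter_subset_left) (fun x hx => hεe hx.2) hpre hDz).trans heN
  obtain ⟨y, ⟨hyM, hyV⟩, hys⟩ := mem_closure_iff_nhds.1 hw (M ∩ e ⁻¹' ball (e z) ε)
    (inter_mem (hM.mem_nhds hwM) (hf.continuousAt hw (hzw.symm ▸ hV)))
  exact disjoint_left.1 hNM (hDN ⟨hys, hyV⟩) hyM

variable {E : Type*} [NormedAddCommGroup E] [NormedSpace ℝ E]

theorem exists_injOn_closedBall_add [ProperSpace E] {Y : Type*} [TopologicalSpace Y] [T2Space Y]
    {f : E → Y} {a : E} {r : ℝ} (hr : 0 ≤ r) (hf : IsLocalHomeomorphOn f (closedBall a r))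
    (hinj : InjOn f (closedBall a r)) : ∃ ε > 0, InjOn f (closedBall a (r + ε)) := by
  obtain ⟨U, hU, hrU, hUinj⟩ := hinj.exists_isOpen_superset (isCompact_closedBall a r)
    (fun x hx => hf.continuousAt hx)
    fun x hx => exists_mem_nhds_injOn_of_isLocalHomeomorphOn hf hx
  obtain ⟨ε, hε, hεU⟩ := (isCompact_closedBall a r).exists_cthickening_subset_open hU hrU
  refine ⟨ε, hε, hUinj.mono ?_⟩
  rwa [cthickening_closedBall hε.le hr, add_comm] at hεU

theorem injOn_closedBall_of_convex_image [ProperSpace E] {f : E → F} {a : E} {R : ℝ}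
    (hf : IsLocalHomeomorphOn f (closedBall a R))
    (hconv : ∀ t, 0 < t → t ≤ R → Convex ℝ (f '' ball a t)) : InjOn f (closedBall a R) := by
  by_contra hR
  set S := {t | ¬ InjOn f (closedBall a t)}
  have hS0 : ∀ t ∈ S, 0 ≤ t := fun t ht => by
    by_contra! h
    exact ht (by simp [closedBall_eq_empty.2 h])
  have hSbdd : BddBelow S := ⟨0, hS0⟩
  set r := sInf S
  have hr0 : 0 ≤ r := le_csInf ⟨R, hR⟩ hS0
  have hrR : r ≤ R := csInf_le hSbdd hR
  have hball : InjOn f (ball a r) := by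
    intro x hx y hy
    have hmax : max (dist x a) (dist y a) ∉ S := notMem_of_lt_csInf (max_lt hx hy) hSbdd
    exact not_not.1 hmax (mem_closedBall.2 (le_max_left _ _))
      (mem_closedBall.2 (le_max_right _ _))
  have hclosed : InjOn f (closedBall a r) := by
    rcases hr0.eq_or_lt with h0 | h0
    · rw [← h0, closedBall_zero]
      exact injOn_singleton f a
    · rw [← closure_ball a h0.ne']
      exact injOn_closure_of_convex_image
        (hf.mono ((closure_ball a h0.ne').trans_subset (closedBall_subset_closedBall hrR)))
        isOpen_ball hball (hconv r h0 hrR)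
  obtain ⟨ε, hε, hinj⟩ := exists_injOn_closedBall_add hr0
    (hf.mono (closedBall_subset_closedBall hrR)) hclosed
  obtain ⟨t, htS, ht⟩ := exists_lt_of_csInf_lt ⟨R, hR⟩ (lt_add_of_pos_right r hε)
  exact htS (hinj.mono (closedBall_subset_closedBall ht.le))

end ConvexImage

theorem pos_of_neg_of_forall_pos_imp_nonpos {V : Type*} [AddCommGroup V] [Module ℝ V]
    {ℓ ψ : V →ₗ[ℝ] ℝ} (hℓ : ℓ ≠ 0) (hψ : ∀ v, 0 < ℓ v → ψ v ≤ 0) {v : V} (hv : ψ v < 0) :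
    0 < ℓ v := by
  by_contra! hle
  obtain ⟨n, hn⟩ : ∃ n, ℓ n = 1 := LinearMap.surjective hℓ 1
  have hpert : ∀ δ > 0, -ψ v + δ * ψ n ≤ 0 := fun δ hδ => by
    simpa using hψ (-v + δ • n) (by simp [hn]; linarith)
  have hlim : Tendsto (fun δ : ℝ => -ψ v + δ * ψ n) (𝓝[>] 0) (𝓝 (-ψ v)) := by
    have hcont : Continuous fun δ : ℝ => -ψ v + δ * ψ n := by fun_prop
    simpa using (hcont.tendsto 0).mono_left nhdsWithin_le_nhds
  have := le_of_tendsto hlim (eventually_mem_nhdsWithin.mono hpert)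
  linarith

section InnerProductSpace

variable {E : Type*} [NormedAddCommGroup E] [InnerProductSpace ℝ E]

theorem mem_posTangentConeAt_ball {a z v : E} {R : ℝ} (hz : z ∈ sphere a R)
    (hv : 0 < ⟪a - z, v⟫_ℝ) : v ∈ posTangentConeAt (ball a R) z := by
  apply mem_posTangentConeAt_of_frequently_mem
  have hsmall : ∀ᶠ s : ℝ in 𝓝[>] 0, s * ‖v‖ ^ 2 < 2 * ⟪a - z, v⟫_ℝ := by
    have hcont : Continuous fun s : ℝ => s * ‖v‖ ^ 2 := by fun_prop
    exact ((hcont.tendsto 0).mono_left nhdsWithin_le_nhds).eventually_lt_const (by simpa)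
  refine Eventually.frequently ?_
  filter_upwards [hsmall, self_mem_nhdsWithin] with s hs (hs0 : 0 < s)
  have hexpand : ‖z + s • v - a‖ ^ 2 = R ^ 2 - s * (2 * ⟪a - z, v⟫_ℝ - s * ‖v‖ ^ 2) := by
    rw [← mem_sphere_iff_norm.1 hz, show z + s • v - a = s • v - (a - z) by abel,
      norm_sub_sq_real, norm_smul, real_inner_smul_left, real_inner_comm, norm_sub_rev a z,
      mul_pow, Real.norm_eq_abs, sq_abs]
    ring
  rw [mem_ball_iff_norm]
  have hR : 0 ≤ R := dist_nonneg.trans_eq hz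
  apply lt_of_pow_lt_pow_left₀ 2 hR
  rw [hexpand]
  nlinarith [mul_pos hs0 (sub_pos.2 hs)]

theorem inner_symm_sub_nonneg_of_convex_image [ProperSpace E] {F : Type*} [NormedAddCommGroup F]
    [NormedSpace ℝ F] {f : E → F} {L : E ≃L[ℝ] F} {a z : E} {R : ℝ} (hR : 0 < R)
    (hf : IsLocalHomeomorphOn f (closedBall a R))
    (hconv : ∀ t, 0 < t → t ≤ R → Convex ℝ (f '' ball a t)) (hz : z ∈ sphere a R)
    (hL : HasFDerivAt f (L : E →L[ℝ] F) z) {x : E} (hx : x ∈ closedBall a R) :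
    0 ≤ ⟪a - z, L.symm (f x - f z)⟫_ℝ := by
  have hinj : InjOn f (closedBall a R) := injOn_closedBall_of_convex_image hf hconv
  have hfz : f z ∉ f '' ball a R := by
    rintro ⟨y, hy, hyz⟩
    obtain rfl := hinj (ball_subset_closedBall hy) (sphere_subset_closedBall hz) hyz
    exact (mem_ball.1 hy).ne hz
  obtain ⟨φ, hφ⟩ := geometric_hahn_banach_open_point (hconv R hR le_rfl)
    (isOpen_image_of_isLocalHomeomorphOn (hf.mono ball_subset_closedBall) isOpen_ball) hfz
  have htangent : ∀ v, 0 < ⟪a - z, v⟫_ℝ → φ (L v) ≤ 0 := by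
    have hmax : IsLocalMaxOn (φ ∘ f) (ball a R) z :=
      eventually_mem_nhdsWithin.mono fun y hy => (hφ _ (mem_image_of_mem f hy)).le
    exact fun v hv => hmax.hasFDerivWithinAt_nonpos
      (φ.hasFDerivAt.comp z hL).hasFDerivWithinAt (mem_posTangentConeAt_ball hz hv)
  have hne : innerₛₗ ℝ (a - z) ≠ 0 := fun h => by
    have : ⟪a - z, a - z⟫_ℝ = 0 := LinearMap.congr_fun h (a - z)
    rw [real_inner_self_eq_norm_sq, norm_sub_rev, mem_sphere_iff_norm.1 hz] at this
    exact (pow_pos hR 2).ne' this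
  have hball : ∀ y ∈ ball a R, 0 ≤ ⟪a - z, L.symm (f y - f z)⟫_ℝ := fun y hy => by
    refine (pos_of_neg_of_forall_pos_imp_nonpos (ψ := (φ ∘L (L : E →L[ℝ] F)).toLinearMap)
      hne htangent ?_).le
    simpa using hφ _ (mem_image_of_mem f hy)
  have hcont : ContinuousOn (fun y => ⟪a - z, L.symm (f y - f z)⟫_ℝ) (closedBall a R) :=
    continuousOn_const.inner
      (L.symm.continuous.comp_continuousOn (hf.continuousOn.sub continuousOn_const))
  rw [← closure_ball a hR.ne'] at hx hcont
  exact le_on_closure hball continuousOn_const hcont hx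

end InnerProductSpace

theorem deriv_deriv_nonneg_of_isLocalMin {u : ℝ → ℝ} {x : ℝ} (hmin : IsLocalMin u x)
    (hu : ContinuousAt u x) : 0 ≤ deriv (deriv u) x := by
  by_contra! hneg
  have hmax : IsLocalMax u x := isLocalMax_of_deriv_deriv_neg hneg hmin.deriv_eq_zero hu
  have hconst : u =ᶠ[𝓝 x] fun _ => u x := by
    filter_upwards [hmin, hmax] with y hy₁ hy₂ using le_antisymm hy₂ hy₁
  have hzero : deriv (deriv u) x = 0 := by simp [hconst.deriv.deriv_eq]
  exact hneg.ne hzero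

theorem re_sq_mul_add_mul_nonpos_of_isMinOn_sphere {k k' : ℂ → ℂ} {k'' a z : ℂ} {R : ℝ}
    (hz : z ∈ sphere a R) (hk : ∀ᶠ w in 𝓝 z, HasDerivAt k (k' w) w) (hk' : HasDerivAt k' k'' z)
    (hmin : IsMinOn (fun w => (k w).re) (sphere a R) z) :
    ((z - a) ^ 2 * k'' + (z - a) * k' z).re ≤ 0 := by
  have hR : 0 ≤ R := dist_nonneg.trans_eq hz
  obtain ⟨θ, rfl⟩ : z ∈ range (circleMap a R) := by rwa [range_circleMap, abs_of_nonneg hR]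
  have hu : ∀ᶠ t in 𝓝 θ, HasDerivAt (fun t => (k (circleMap a R t)).re)
      (k' (circleMap a R t) * (circleMap 0 R t * I)).re t := by
    filter_upwards [(continuous_circleMap a R).continuousAt.eventually hk] with t ht
    exact reCLM.hasFDerivAt.comp_hasDerivAt t (ht.comp t (hasDerivAt_circleMap a R t))
  have hu' : HasDerivAt (fun t => (k' (circleMap a R t) * (circleMap 0 R t * I)).re)
      (k'' * (circleMap 0 R θ * I) * (circleMap 0 R θ * I) +
        k' (circleMap a R θ) * (circleMap 0 R θ * I * I)).re θ :=
    reCLM.hasFDerivAt.comp_hasDerivAt θ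
      ((hk'.comp θ (hasDerivAt_circleMap a R θ)).mul ((hasDerivAt_circleMap 0 R θ).mul_const I))
  have hlocal : IsLocalMin (fun t => (k (circleMap a R t)).re) θ :=
    .of_forall fun t => hmin (circleMap_mem_sphere a hR t)
  have hnonneg := deriv_deriv_nonneg_of_isLocalMin hlocal hu.self_of_nhds.continuousAt
  have hderiv : deriv (fun t => (k (circleMap a R t)).re) =ᶠ[𝓝 θ]
      fun t => (k' (circleMap a R t) * (circleMap 0 R t * I)).re := hu.mono fun t ht => ht.deriv
  rw [hderiv.deriv_eq, hu'.deriv] at hnonneg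
  rw [circleMap_sub_center, ← neg_nonneg, ← neg_re]
  convert hnonneg using 2
  linear_combination (-k'' * circleMap 0 R θ ^ 2 - k' (circleMap a R θ) * circleMap 0 R θ) * I_sq

/-- The real differential `v ↦ α v + conj (β v)` of a harmonic map `h + conj g` at a point where
`h' = α` and `g' = β`. -/
def harmonicDifferential (α β : ℂ) : ℂ →L[ℝ] ℂ :=
  α • (1 : ℂ →L[ℝ] ℂ) + (conjCLE : ℂ →L[ℝ] ℂ) ∘L (β • (1 : ℂ →L[ℝ] ℂ))

theorem hasStrictFDerivAt_add_conj {h g : ℂ → ℂ} {α β z : ℂ} (hh : HasStrictDerivAt h α z)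
    (hg : HasStrictDerivAt g β z) :
    HasStrictFDerivAt (fun w => h w + conj (g w)) (harmonicDifferential α β) z :=
  hh.complexToReal_fderiv.add
    (conjCLE.toContinuousLinearMap.hasStrictFDerivAt.comp z hg.complexToReal_fderiv)

theorem harmonicDifferential_injective {α β : ℂ} (h : ‖β‖ < ‖α‖) :
    Function.Injective (harmonicDifferential α β) := by
  rw [injective_iff_map_eq_zero]
  intro v hv
  have hnorm : ‖α‖ * ‖v‖ = ‖β‖ * ‖v‖ := by
    have : α * v = -conj (β * v) := eq_neg_of_add_eq_zero_left hv
    simpa using congrArg norm this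
  by_contra hv0
  exact h.ne' (mul_right_cancel₀ (norm_ne_zero_iff.2 hv0) hnorm)

theorem harmonicDifferential_one_zero :
    harmonicDifferential 1 0 = ContinuousLinearEquiv.refl ℝ ℂ := by
  ext
  simp [harmonicDifferential]

/-- The differential of a harmonic map at a point where it is sense-preserving, as an
isomorphism. -/
def harmonicDifferentialEquiv {α β : ℂ} (h : ‖β‖ < ‖α‖) : ℂ ≃L[ℝ] ℂ :=
  (LinearEquiv.ofInjectiveEndo (harmonicDifferential α β : ℂ →ₗ[ℝ] ℂ)
    (harmonicDifferential_injective h)).toContinuousLinearEquiv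

section Harmonic

variable {h g : ℂ → ℂ} {a z : ℂ} {R : ℝ}

theorem isLocalHomeomorphOn_add_conj {s : Set ℂ} (hh : ∀ w ∈ s, AnalyticAt ℂ h w)
    (hg : ∀ w ∈ s, AnalyticAt ℂ g w) (hsp : ∀ w ∈ s, ‖deriv g w‖ < ‖deriv h w‖) :
    IsLocalHomeomorphOn (fun w => h w + conj (g w)) s :=
  isLocalHomeomorphOn_of_hasStrictFDerivAt_equiv fun w hw =>
    ⟨harmonicDifferentialEquiv (hsp w hw),
      hasStrictFDerivAt_add_conj (hh w hw).hasStrictDerivAt (hg w hw).hasStrictDerivAt⟩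

theorem isMinOn_re_of_convex_image (hR : 0 < R) (hz : z ∈ sphere a R)
    (hh : ∀ w ∈ closedBall a R, AnalyticAt ℂ h w) (hg : ∀ w ∈ closedBall a R, AnalyticAt ℂ g w)
    (hsp : ∀ w ∈ closedBall a R, ‖deriv g w‖ < ‖deriv h w‖)
    (hd1 : deriv h z = 1) (gd1 : deriv g z = 0)
    (hconv : ∀ t, 0 < t → t ≤ R → Convex ℝ ((fun w => h w + conj (g w)) '' ball a t)) :
    IsMinOn (fun w => (conj (a - z) * h w + (a - z) * g w).re) (closedBall a R) z := by
  intro w hw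
  have hz' := sphere_subset_closedBall hz
  have hderiv : HasFDerivAt (fun w => h w + conj (g w))
      (ContinuousLinearEquiv.refl ℝ ℂ : ℂ →L[ℝ] ℂ) z := by
    rw [← harmonicDifferential_one_zero, ← hd1, ← gd1]
    exact (hasStrictFDerivAt_add_conj (hh z hz').hasStrictDerivAt
      (hg z hz').hasStrictDerivAt).hasFDerivAt
  have hsupport := inner_symm_sub_nonneg_of_convex_image hR (isLocalHomeomorphOn_add_conj hh hg hsp)
    hconv hz hderiv hw
  have hinner : ⟪a - z, h w + conj (g w) - (h z + conj (g z))⟫_ℝ =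
      (conj (a - z) * h w + (a - z) * g w).re - (conj (a - z) * h z + (a - z) * g z).re := by
    rw [Complex.inner]
    simp only [map_sub, mul_re, sub_re, sub_im, add_re, add_im, conj_re, conj_im]
    ring
  exact sub_nonneg.1 (hinner ▸ hsupport)

theorem re_deriv_deriv_le_of_convex_image (hR : 0 < R) (hz : z ∈ sphere a R)
    (hh : ∀ w ∈ closedBall a R, AnalyticAt ℂ h w) (hg : ∀ w ∈ closedBall a R, AnalyticAt ℂ g w)
    (hsp : ∀ w ∈ closedBall a R, ‖deriv g w‖ < ‖deriv h w‖)
    (hd1 : deriv h z = 1) (gd1 : deriv g z = 0)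
    (hconv : ∀ t, 0 < t → t ≤ R → Convex ℝ ((fun w => h w + conj (g w)) '' ball a t)) :
    (R ^ 2 * (a - z) * deriv (deriv h) z + (a - z) ^ 3 * deriv (deriv g) z).re ≤ R ^ 2 := by
  have hhz := hh z (sphere_subset_closedBall hz)
  have hgz := hg z (sphere_subset_closedBall hz)
  have hk : ∀ᶠ w in 𝓝 z, HasDerivAt (fun w => conj (a - z) * h w + (a - z) * g w)
      (conj (a - z) * deriv h w + (a - z) * deriv g w) w := by
    filter_upwards [hhz.eventually_analyticAt, hgz.eventually_analyticAt] with w hhw hgw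
    exact (hhw.differentiableAt.hasDerivAt.const_mul _).add
      (hgw.differentiableAt.hasDerivAt.const_mul _)
  have hk' : HasDerivAt (fun w => conj (a - z) * deriv h w + (a - z) * deriv g w)
      (conj (a - z) * deriv (deriv h) z + (a - z) * deriv (deriv g) z) z :=
    (hhz.deriv.differentiableAt.hasDerivAt.const_mul _).add
      (hgz.deriv.differentiableAt.hasDerivAt.const_mul _)
  have hmin := (isMinOn_re_of_convex_image hR hz hh hg hsp hd1 gd1 hconv).on_subset
    sphere_subset_closedBall
  have hsecond := re_sq_mul_add_mul_nonpos_of_isMinOn_sphere hz hk hk' hmin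
  have hnormSq : (a - z) * conj (a - z) = R ^ 2 := by
    rw [mul_conj', norm_sub_rev, mem_sphere_iff_norm.1 hz]
  have hsplit : R ^ 2 * (a - z) * deriv (deriv h) z + (a - z) ^ 3 * deriv (deriv g) z =
      ((z - a) ^ 2 * (conj (a - z) * deriv (deriv h) z + (a - z) * deriv (deriv g) z) +
        (z - a) * (conj (a - z) * deriv h z + (a - z) * deriv g z)) + (R ^ 2 : ℝ) := by
    rw [hd1, gd1, ofReal_pow, ← hnormSq]
    ring
  rw [hsplit, add_re, ofReal_re]
  linarith

end Harmonic

theorem AK0_a2_add_re_b2_le_one_general (h g : ℂ → ℂ)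
    (hh : DifferentiableOn ℂ h (ball (0 : ℂ) 1))
    (hg : DifferentiableOn ℂ g (ball (0 : ℂ) 1))
    (hsp : ∀ z ∈ ball (0 : ℂ) 1, ‖deriv g z‖ < ‖deriv h z‖)
    (hd1 : deriv h 0 = 1) (gd1 : deriv g 0 = 0)
    (hconv : ∀ a ∈ ball (0 : ℂ) 1, ∀ r : ℝ, 0 < r → r < 1 - ‖a‖ →
        Convex ℝ ((fun z => h z + conj (g z)) '' ball a r))
    {ω : ℂ} (hω : ‖ω‖ = 1) :
    (ω * (deriv (deriv h) 0 / 2) + ω ^ 3 * (deriv (deriv g) 0 / 2)).re ≤ 1 := by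
  set c := (ω * (deriv (deriv h) 0 / 2) + ω ^ 3 * (deriv (deriv g) 0 / 2)).re
  have hdisc : ∀ ρ ∈ Ioo (0 : ℝ) (1 / 2), 2 * ρ * c ≤ 1 := by
    rintro ρ ⟨hρ₀, hρ⟩
    have hnorm : ‖ρ * ω‖ = ρ := by simp [hω, abs_of_pos hρ₀]
    have hsub : closedBall (ρ * ω) ρ ⊆ ball 0 1 :=
      closedBall_subset_ball' (by rw [dist_zero_right, hnorm]; linarith)
    have hbound := re_deriv_deriv_le_of_convex_image (z := 0) hρ₀ (by simpa using hnorm)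
      (fun w hw => hh.analyticAt (isOpen_ball.mem_nhds (hsub hw)))
      (fun w hw => hg.analyticAt (isOpen_ball.mem_nhds (hsub hw)))
      (fun w hw => hsp w (hsub hw)) hd1 gd1
      (fun t ht htρ => hconv _ (hsub (mem_closedBall_self hρ₀.le)) t ht (by linarith))
    have hscale : ρ ^ 2 * (ρ * ω - 0) * deriv (deriv h) 0 + (ρ * ω - 0) ^ 3 * deriv (deriv g) 0 =
        ((ρ ^ 2 * (2 * ρ) : ℝ) : ℂ) *
          (ω * (deriv (deriv h) 0 / 2) + ω ^ 3 * (deriv (deriv g) 0 / 2)) := by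
      push_cast
      ring
    rw [hscale, re_ofReal_mul, mul_assoc] at hbound
    exact (mul_le_iff_le_one_right (pow_pos hρ₀ 2)).1 hbound
  have hlim : Tendsto (fun ρ : ℝ => 2 * ρ * c) (𝓝[<] (1 / 2)) (𝓝 c) := by
    have hcont : Continuous fun ρ : ℝ => 2 * ρ * c := by fun_prop
    simpa using (hcont.tendsto (1 / 2)).mono_left nhdsWithin_le_nhds
  exact le_of_tendsto hlim (mem_of_superset (Ioo_mem_nhdsLT (by norm_num)) hdisc)

/-- If `f = h + conj g ∈ 𝒜𝒦⁰_H` and the Taylor coefficient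
`a₂ = h''(0)/2` is a nonnegative real number, then `a₂ + Re b₂ ≤ 1`, where
`b₂ = g''(0)/2`. -/
theorem AK0_a2_add_re_b2_le_one (h g : ℂ → ℂ)
    (hh : DifferentiableOn ℂ h (ball (0:ℂ) 1))
    (hg : DifferentiableOn ℂ g (ball (0:ℂ) 1))
    (hsp : ∀ z ∈ ball (0:ℂ) 1, ‖deriv g z‖ < ‖deriv h z‖)
    (h0 : h 0 = 0) (g0 : g 0 = 0) (hd1 : deriv h 0 = 1) (gd1 : deriv g 0 = 0)
    (hconv : ∀ a ∈ ball (0:ℂ) 1, ∀ r : ℝ, 0 < r → r < 1 - ‖a‖ →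
        Convex ℝ ((fun z => h z + conj (g z)) '' ball a r))
    (ha2im : (deriv (deriv h) 0 / 2).im = 0)
    (ha2re : 0 ≤ (deriv (deriv h) 0 / 2).re) :
    (deriv (deriv h) 0 / 2).re + (deriv (deriv g) 0 / 2).re ≤ 1 := by
  simpa using AK0_a2_add_re_b2_le_one_general h g hh hg hsp hd1 gd1 hconv (ω := 1) norm_one
end
end
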